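/- Let F ⊆ ℝ² be a non-empty bounded set. Then dim_A π_x(F) ≥ min{dim_A F, 1} for all x ∈ ℝ² outside a set of exceptions of Hausdorff dimension at most 1. -/

import Mathlib

open Metric MeasureTheory Filter Set
open scoped ENNReal NNReal Pointwise Topology

noncomputable section

/-- The Assouad dimension of a subset of a (pseudo)metric space: the infimum of all
`α ≥ 0` for which there is `C > 0` such that for every `x ∈ E` and all scales `0 < r < R`,
the set `E ∩ B(x,R)` can be covered by at most `C (R/r)^α` sets of diameter at most `r`. -/
def assouadDim {X : Type*} [PseudoMetricSpace X] (E : Set X) : ℝ :=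
  sInf {α : ℝ | 0 ≤ α ∧ ∃ C : ℝ, 0 < C ∧ ∀ x ∈ E, ∀ r R : ℝ, 0 < r → r < R →
    ∃ 𝒰 : Finset (Set X), (E ∩ closedBall x R ⊆ ⋃ U ∈ 𝒰, U) ∧
      (∀ U ∈ 𝒰, EMetric.diam U ≤ ENNReal.ofReal r) ∧
      ((𝒰.card : ℝ) ≤ C * (R / r) ^ α)}

/-- Euclidean space `ℝⁿ`. -/
abbrev Euc (n : ℕ) := EuclideanSpace ℝ (Fin n)

/-- The radial projection with centre `t`, mapping `ℝⁿ \\ {t}` onto the unit sphere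
centred at `t`; we set `π_t(t) = t` for convenience. -/
def radialProj {n : ℕ} (t : Euc n) (x : Euc n) : Euc n :=
  haveI := Classical.propDecidable (x = t)
  if x = t then t else ‖x - t‖⁻¹ • (x - t) + t

/-!
If `x` is exceptional, then `π_x(F)` has an Assouad bound with an exponent `s < 1` below some
`d < dim_A F`. As `F` has no Assouad bound with exponent `d`, it contains, in arbitrarily small
balls `B(z_n, R_n)`, sets of `b ^ (n d)` points that are `R_n / b ^ n`-separated, and `z_n → z₀`
along an ultrafilter. Seen from `x`, the rescaled sets `P_n` are projected almost linearly, in the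
direction of slope `e = projSlope z₀ x`. The heart of the proof is that these slopes form a
countable set, so that the exceptional points lie on countably many lines.

Move `P_n` by a random power `b ^ i` and a random translation, cut the plane into horizontal unit
strips, and cut these at scale `2 ^ (-l)` along the projection in direction `e`. Let `V_l(e)` be the
limiting mean variance of the height on the cells, which decreases in `l`. It is bounded below: a
telescoping sum of entropies shows that otherwise the projections would determine too many of the
digits of `P_n`, against `s < d`. On the other hand, the height is a multiple of the difference of
two projections. So if `V_l(e)` and `V_l(e')` barely drop for `l > L`, where `|e - e'|` is about
`2 ^ (-L)`, then `V_L(e)` is small (points near the edges of cells are negligible as `s < 1`).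
Therefore `inf_l V_l` is smaller by a fixed amount at all `e' ≠ e` close to `e`, which is possible
for countably many directions only.
-/

/-! ### Averages over the classes of a labelling of a finite set -/

/-- On the finite set `s`, the function `φ` is determined by the label `g`. -/
def FactorsOn {Ω γ δ : Type*} (s : Finset Ω) (g : Ω → γ) (φ : Ω → δ) : Prop :=
  ∀ ω ∈ s, ∀ ω' ∈ s, g ω = g ω' → φ ω = φ ω'

open Classical in
/-- The class of `ω` under the labelling `g` of the finite set `s`. -/
def labelClass {Ω γ : Type*} (s : Finset Ω) (g : Ω → γ) (ω : Ω) : Finset Ω :=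
  {ω' ∈ s | g ω' = g ω}

/-- The average of `f` over the class of `ω` under the labelling `g` of `s`: the conditional
expectation of `f` given `g` for the uniform distribution on `s`. -/
def classAvg {Ω γ : Type*} (s : Finset Ω) (g : Ω → γ) (f : Ω → ℝ) (ω : Ω) : ℝ :=
  (∑ ω' ∈ labelClass s g ω, f ω') / (labelClass s g ω).card

/-- The sum of squared deviations of `f` from its class averages, i.e. `s.card` times the mean
conditional variance of `f` given `g`. -/
def classVar {Ω γ : Type*} (s : Finset Ω) (g : Ω → γ) (f : Ω → ℝ) : ℝ :=
  ∑ ω ∈ s, (f ω - classAvg s g f ω) ^ 2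

section ClassAvg

variable {Ω γ δ ε : Type*} {s : Finset Ω} {g : Ω → γ} {g' : Ω → δ} {f φ ψ : Ω → ℝ} {ω ω' : Ω}

lemma FactorsOn.trans {χ : Ω → ε} (hgχ : FactorsOn s g χ) (hg : FactorsOn s g' g) :
    FactorsOn s g' χ :=
  fun ω hω ω' hω' h => hgχ ω hω ω' hω' (hg ω hω ω' hω' h)

lemma FactorsOn.mul (hφ : FactorsOn s g φ) (hψ : FactorsOn s g ψ) :
    FactorsOn s g fun ω => φ ω * ψ ω :=
  fun ω hω ω' hω' h => congrArg₂ (· * ·) (hφ ω hω ω' hω' h) (hψ ω hω ω' hω' h)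

lemma FactorsOn.sub (hφ : FactorsOn s g φ) (hψ : FactorsOn s g ψ) :
    FactorsOn s g fun ω => φ ω - ψ ω :=
  fun ω hω ω' hω' h => congrArg₂ (· - ·) (hφ ω hω ω' hω' h) (hψ ω hω ω' hω' h)

lemma mem_labelClass : ω' ∈ labelClass s g ω ↔ ω' ∈ s ∧ g ω' = g ω := by
  simp [labelClass]

lemma labelClass_subset : labelClass s g ω ⊆ s := fun _ h => (mem_labelClass.mp h).1

lemma labelClass_congr (h : g ω = g ω') : labelClass s g ω = labelClass s g ω' := by
  ext; simp only [mem_labelClass, h]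

lemma classAvg_congr (h : g ω = g ω') : classAvg s g f ω = classAvg s g f ω' := by
  simp only [classAvg, labelClass_congr h]

lemma factorsOn_classAvg : FactorsOn s g (classAvg s g f) := fun _ _ _ _ h => classAvg_congr h

lemma labelClass_card_pos (h : ω ∈ s) : 0 < (labelClass s g ω).card :=
  Finset.card_pos.mpr ⟨ω, mem_labelClass.mpr ⟨h, rfl⟩⟩

lemma sum_labelClass_comm (F : Ω → Ω → ℝ) :
    ∑ ω ∈ s, ∑ ω' ∈ labelClass s g ω, F ω ω' = ∑ ω ∈ s, ∑ ω' ∈ labelClass s g ω, F ω' ω := by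
  refine Finset.sum_comm' fun x y => ?_
  simp only [mem_labelClass, eq_comm (a := g x)]
  tauto

lemma sum_mul_classAvg (hφ : FactorsOn s g φ) :
    ∑ ω ∈ s, φ ω * classAvg s g f ω = ∑ ω ∈ s, φ ω * f ω := by
  calc ∑ ω ∈ s, φ ω * classAvg s g f ω
      = ∑ ω ∈ s, ∑ ω' ∈ labelClass s g ω, φ ω * f ω' / (labelClass s g ω).card :=
        Finset.sum_congr rfl fun ω _ => by
          rw [classAvg, ← Finset.sum_div, ← Finset.mul_sum, mul_div_assoc]
    _ = ∑ ω ∈ s, ∑ ω' ∈ labelClass s g ω, φ ω' * f ω / (labelClass s g ω').card :=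
        sum_labelClass_comm _
    _ = ∑ ω ∈ s, ∑ _ ∈ labelClass s g ω, φ ω * f ω / (labelClass s g ω).card :=
        Finset.sum_congr rfl fun ω hω => Finset.sum_congr rfl fun ω' hω' => by
          obtain ⟨hs, hg⟩ := mem_labelClass.mp hω'
          rw [labelClass_congr hg, hφ ω' hs ω hω hg]
    _ = ∑ ω ∈ s, φ ω * f ω :=
        Finset.sum_congr rfl fun ω hω => by
          have := (labelClass_card_pos (g := g) hω).ne'
          rw [Finset.sum_const, nsmul_eq_mul]
          field_simp

lemma sum_mul_sub_classAvg (hφ : FactorsOn s g φ) :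
    ∑ ω ∈ s, φ ω * (f ω - classAvg s g f ω) = 0 := by
  simp only [mul_sub, Finset.sum_sub_distrib, sum_mul_classAvg hφ, sub_self]

/-- The Pythagorean theorem for the orthogonal projection `f ↦ classAvg s g f`. -/
lemma sum_sub_sq_eq_classVar_add (hψ : FactorsOn s g ψ) :
    ∑ ω ∈ s, (f ω - ψ ω) ^ 2
      = classVar s g f + ∑ ω ∈ s, (classAvg s g f ω - ψ ω) ^ 2 := by
  have horth : ∑ ω ∈ s, (classAvg s g f ω - ψ ω) * (f ω - classAvg s g f ω) = 0 :=
    sum_mul_sub_classAvg (factorsOn_classAvg.sub hψ)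
  calc ∑ ω ∈ s, (f ω - ψ ω) ^ 2
      = ∑ ω ∈ s, ((f ω - classAvg s g f ω) ^ 2 + (classAvg s g f ω - ψ ω) ^ 2
          + 2 * ((classAvg s g f ω - ψ ω) * (f ω - classAvg s g f ω))) :=
        Finset.sum_congr rfl fun ω _ => by ring
    _ = classVar s g f + ∑ ω ∈ s, (classAvg s g f ω - ψ ω) ^ 2 := by
        rw [Finset.sum_add_distrib, Finset.sum_add_distrib, ← Finset.mul_sum, horth, mul_zero,
          add_zero, classVar]

lemma classVar_le_sum_sub_sq (hψ : FactorsOn s g ψ) :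
    classVar s g f ≤ ∑ ω ∈ s, (f ω - ψ ω) ^ 2 := by
  rw [sum_sub_sq_eq_classVar_add hψ]
  exact le_add_of_nonneg_right (Finset.sum_nonneg fun _ _ => sq_nonneg _)

lemma classVar_nonneg : 0 ≤ classVar s g f := Finset.sum_nonneg fun _ _ => sq_nonneg _

lemma classVar_eq_add_of_factorsOn (hg : FactorsOn s g' g) :
    classVar s g f
      = classVar s g' f + ∑ ω ∈ s, (classAvg s g' f ω - classAvg s g f ω) ^ 2 :=
  sum_sub_sq_eq_classVar_add (factorsOn_classAvg.trans hg)

lemma classVar_le_of_factorsOn (hg : FactorsOn s g' g) : classVar s g' f ≤ classVar s g f :=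
  classVar_le_sum_sub_sq (factorsOn_classAvg.trans hg)

lemma classAvg_mem_Icc (hf : ∀ ω ∈ s, f ω ∈ Icc (0 : ℝ) 1) :
    classAvg s g f ω ∈ Icc (0 : ℝ) 1 := by
  have hclass : ∀ ω' ∈ labelClass s g ω, f ω' ∈ Icc (0 : ℝ) 1 :=
    fun ω' h => hf ω' (mem_labelClass.mp h).1
  refine ⟨div_nonneg (Finset.sum_nonneg fun ω' h => (hclass ω' h).1) (Nat.cast_nonneg _),
    div_le_one_of_le₀ ?_ (Nat.cast_nonneg _)⟩
  simpa using Finset.sum_le_card_nsmul _ _ 1 fun ω' h => (hclass ω' h).2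

lemma sum_abs_classAvg_sub_le (hg : FactorsOn s g' g) :
    ∑ ω ∈ s, |classAvg s g' f ω - classAvg s g f ω|
      ≤ √(s.card * (classVar s g f - classVar s g' f)) := by
  apply Real.le_sqrt_of_sq_le
  rw [classVar_eq_add_of_factorsOn hg, add_sub_cancel_left]
  simpa only [sq_abs] using
    sq_sum_le_card_mul_sum_sq (s := s) (f := fun ω => |classAvg s g' f ω - classAvg s g f ω|)

lemma abs_sum_mul_sub_classAvg_le (hg : FactorsOn s g' g) (hφ : FactorsOn s g' φ)
    (hφ₁ : ∀ ω ∈ s, |φ ω| ≤ 1) :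
    |∑ ω ∈ s, φ ω * (f ω - classAvg s g f ω)|
      ≤ √(s.card * (classVar s g f - classVar s g' f)) := by
  calc |∑ ω ∈ s, φ ω * (f ω - classAvg s g f ω)|
      = |∑ ω ∈ s, φ ω * (classAvg s g' f ω - classAvg s g f ω)| := by
        simp only [mul_sub, Finset.sum_sub_distrib, sum_mul_classAvg hφ]
    _ ≤ ∑ ω ∈ s, |classAvg s g' f ω - classAvg s g f ω| :=
        (Finset.abs_sum_le_sum_abs _ _).trans <| Finset.sum_le_sum fun ω hω => by
          rw [abs_mul]
          exact mul_le_of_le_one_left (abs_nonneg _) (hφ₁ ω hω)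
    _ ≤ √(s.card * (classVar s g f - classVar s g' f)) := sum_abs_classAvg_sub_le hg

lemma sub_sq_le_one {x y : ℝ} (hx : x ∈ Icc (0 : ℝ) 1) (hy : y ∈ Icc (0 : ℝ) 1) :
    (x - y) ^ 2 ≤ 1 :=
  (sq_le_one_iff_abs_le_one _).mpr (Real.dist_le_of_mem_Icc_01 hx hy)

lemma classVar_le_add_card_ne {g₁ g₂ : Ω → γ} [DecidablePred fun ω => g₂ ω ≠ g₁ ω]
    (hf : ∀ ω ∈ s, f ω ∈ Icc (0 : ℝ) 1) :
    classVar s g₂ f ≤ classVar s g₁ f + ({ω ∈ s | g₂ ω ≠ g₁ ω} : Finset Ω).card := by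
  classical
  -- `ψ` averages over the `g₁`-class carrying the same label as the `g₂`-class of `ω`.
  set ψ : Ω → ℝ := fun ω =>
    if h : ∃ ω' ∈ s, g₁ ω' = g₂ ω then classAvg s g₁ f h.choose else 0 with hψ
  have hψm : FactorsOn s g₂ ψ := fun ω _ ω' _ h => by simp only [hψ, h]
  refine (classVar_le_sum_sub_sq hψm).trans ?_
  rw [classVar, Finset.card_filter, Nat.cast_sum, ← Finset.sum_add_distrib]
  refine Finset.sum_le_sum fun ω hω => ?_
  by_cases h : g₂ ω = g₁ ω
  · have hex : ∃ ω' ∈ s, g₁ ω' = g₂ ω := ⟨ω, hω, h.symm⟩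
    have hψω : ψ ω = classAvg s g₁ f ω := by
      simp only [hψ, dif_pos hex]
      exact classAvg_congr (hex.choose_spec.2.trans h)
    simp [h, hψω]
  · have hψ₁ : ψ ω ∈ Icc (0 : ℝ) 1 := by
      simp only [hψ]
      split_ifs
      exacts [classAvg_mem_Icc hf, ⟨le_rfl, zero_le_one⟩]
    simpa [h] using (sub_sq_le_one (hf ω hω) hψ₁).trans
      (le_add_of_nonneg_left (sq_nonneg (f ω - classAvg s g₁ f ω)))

end ClassAvg

/-! ### Two labellings related by a shear -/

section Quantisation

variable {N : ℕ} {x y : ℝ}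

/-- The fractional part of `x`, rounded down to a multiple of `1 / N`. -/
def gridFract (N : ℕ) (x : ℝ) : ℝ := ⌊N * Int.fract x⌋ / N

lemma gridFract_mem_Icc (hN : 0 < N) : gridFract N x ∈ Icc (0 : ℝ) 1 := by
  have hN' : (0 : ℝ) < N := Nat.cast_pos.mpr hN
  refine ⟨div_nonneg (Int.cast_nonneg (Int.floor_nonneg.mpr (by positivity))) hN'.le,
    (div_le_one hN').mpr ((Int.floor_le _).trans ?_)⟩
  exact mul_le_of_le_one_right hN'.le (Int.fract_lt_one x).le

lemma abs_fract_sub_gridFract_le (hN : 0 < N) : |Int.fract x - gridFract N x| ≤ 1 / N := by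
  have hN' : (0 : ℝ) < N := Nat.cast_pos.mpr hN
  have h : Int.fract x - gridFract N x = Int.fract (N * Int.fract x) / N := by
    rw [gridFract, ← Int.self_sub_floor (N * Int.fract x), sub_div,
      mul_div_cancel_left₀ _ hN'.ne']
  rw [h, abs_of_nonneg (by positivity)]
  gcongr
  exact (Int.fract_lt_one _).le

lemma floor_eq_of_floor_natCast_mul_eq (hN : 0 < N) (h : ⌊N * x⌋ = ⌊N * y⌋) : ⌊x⌋ = ⌊y⌋ := by
  have hdiv : ∀ z : ℝ, ⌊z⌋ = ⌊N * z⌋ / (N : ℤ) := fun z => by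
    rw [← Int.floor_div_natCast, mul_div_cancel_left₀ z (Nat.cast_ne_zero.mpr hN.ne')]
  rw [hdiv x, hdiv y, h]

lemma gridFract_eq_of_floor_natCast_mul_eq (hN : 0 < N) (h : ⌊N * x⌋ = ⌊N * y⌋) :
    gridFract N x = gridFract N y := by
  have hfloor : ∀ z : ℝ, ⌊N * Int.fract z⌋ = ⌊N * z⌋ - N * ⌊z⌋ := fun z => by
    rw [Int.fract, mul_sub, ← Int.floor_sub_intCast]
    push_cast
    rfl
  rw [gridFract, gridFract, hfloor, hfloor, h, floor_eq_of_floor_natCast_mul_eq hN h]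

end Quantisation

/-- Refines the labelling `B` by the unit interval `[k, k + 1)` containing the value of `a`. -/
def cellLabel {Ω κ : Type*} (B : Ω → κ) (a : Ω → ℝ) (ω : Ω) : κ × ℤ := (B ω, ⌊a ω⌋)

/-- No point of `s` with the same label as `ω` has its `a`-value within `η` of an endpoint of the
unit interval `[⌊a ω⌋, ⌊a ω⌋ + 1]`. -/
def EdgeFree {Ω κ : Type*} (s : Finset Ω) (B : Ω → κ) (a : Ω → ℝ) (η : ℝ) (ω : Ω) : Prop :=
  ∀ ω' ∈ s, B ω' = B ω → η < |a ω' - ⌊a ω⌋| ∧ η < |a ω' - (⌊a ω⌋ + 1)|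

section Shear

variable {Ω κ : Type*} {s : Finset Ω} {B : Ω → κ} {a a' y W : Ω → ℝ} {c η : ℝ} {N : ℕ} {ω ω' : Ω}

lemma factorsOn_cellLabel_natCast_mul (hN : 0 < N) :
    FactorsOn s (cellLabel B fun ω => N * a ω) (cellLabel B a) := by
  intro ω _ ω' _ h
  simp only [cellLabel, Prod.mk.injEq] at h ⊢
  exact ⟨h.1, floor_eq_of_floor_natCast_mul_eq hN h.2⟩

lemma abs_sum_mul_fract_mul_sub_classAvg_le (hN : 0 < N) (hy : ∀ ω ∈ s, y ω ∈ Icc (0 : ℝ) 1)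
    (hW₁ : ∀ ω ∈ s, W ω ∈ Icc (0 : ℝ) 1) (hW : FactorsOn s (cellLabel B a) W) :
    |∑ ω ∈ s, W ω * Int.fract (a ω) * (y ω - classAvg s (cellLabel B a) y ω)|
      ≤ √(s.card * (classVar s (cellLabel B a) y - classVar s (cellLabel B fun ω => N * a ω) y))
        + s.card / N := by
  set A := classAvg s (cellLabel B a) y
  set q : Ω → ℝ := fun ω => gridFract N (a ω)
  have hgrid := factorsOn_cellLabel_natCast_mul (s := s) (B := B) (a := a) hN
  have hq : FactorsOn s (cellLabel B fun ω => N * a ω) q := fun ω _ ω' _ h =>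
    gridFract_eq_of_floor_natCast_mul_eq hN (Prod.mk.inj h).2
  have hmain := abs_sum_mul_sub_classAvg_le (f := y) hgrid ((hW.trans hgrid).mul hq)
    fun ω hω => by
      have hq₁ := gridFract_mem_Icc (x := a ω) hN
      rw [abs_of_nonneg (mul_nonneg (hW₁ ω hω).1 hq₁.1)]
      exact mul_le_one₀ (hW₁ ω hω).2 hq₁.1 hq₁.2
  have herr : |∑ ω ∈ s, W ω * (Int.fract (a ω) - q ω) * (y ω - A ω)| ≤ s.card / N := by
    rw [div_eq_mul_one_div]
    refine (Finset.abs_sum_le_sum_abs _ _).trans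
      ((Finset.sum_le_card_nsmul _ _ (1 / N : ℝ) fun ω hω => ?_).trans_eq (nsmul_eq_mul _ _))
    rw [abs_mul, abs_mul, abs_of_nonneg (hW₁ ω hω).1]
    calc W ω * |Int.fract (a ω) - q ω| * |y ω - A ω|
        ≤ 1 * (1 / N) * 1 := by
          gcongr
          exacts [(hW₁ ω hω).2, abs_fract_sub_gridFract_le hN,
            Real.dist_le_of_mem_Icc_01 (hy ω hω) (classAvg_mem_Icc hy)]
      _ = 1 / N := by ring
  calc |∑ ω ∈ s, W ω * Int.fract (a ω) * (y ω - A ω)|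
      = |∑ ω ∈ s, W ω * q ω * (y ω - A ω)
          + ∑ ω ∈ s, W ω * (Int.fract (a ω) - q ω) * (y ω - A ω)| := by
        rw [← Finset.sum_add_distrib]
        congr 1
        exact Finset.sum_congr rfl fun ω _ => by ring
    _ ≤ _ := (abs_add_le _ _).trans (add_le_add hmain herr)

namespace EdgeFree

lemma of_cellLabel_eq (h : EdgeFree s B a η ω) (hω : cellLabel B a ω = cellLabel B a ω') :
    EdgeFree s B a η ω' := by
  obtain ⟨hB, hfloor⟩ := Prod.mk.inj hω
  intro ω'' hs hB'
  rw [← hfloor]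
  exact h ω'' hs (hB'.trans hB.symm)

lemma floor_eq_iff (h : EdgeFree s B a η ω) (hη : 2 * |c| ≤ η)
    (hy : ∀ ω ∈ s, y ω ∈ Icc (0 : ℝ) 1) (ha : ∀ ω ∈ s, a' ω = a ω + c * y ω) (hω' : ω' ∈ s)
    (hB : B ω' = B ω) : ⌊a' ω'⌋ = ⌊a ω⌋ ↔ ⌊a ω'⌋ = ⌊a ω⌋ := by
  have hc := abs_nonneg c
  have hcy : |c * y ω'| ≤ |c| := by
    rw [abs_mul, abs_of_nonneg (hy ω' hω').1]
    exact mul_le_of_le_one_right hc (hy ω' hω').2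
  obtain ⟨hcy₁, hcy₂⟩ := abs_le.mp hcy
  obtain ⟨hlow, hupp⟩ := h ω' hω' hB
  rw [lt_abs] at hlow hupp
  simp only [Int.floor_eq_iff, ha ω' hω']
  constructor <;> rintro ⟨h₁, h₂⟩ <;> constructor <;>
    rcases hlow with hlow | hlow <;> rcases hupp with hupp | hupp <;> linarith

lemma of_cellLabel_shear_eq (h : EdgeFree s B a η ω) (hη : 2 * |c| ≤ η)
    (hy : ∀ ω ∈ s, y ω ∈ Icc (0 : ℝ) 1) (ha : ∀ ω ∈ s, a' ω = a ω + c * y ω)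
    (hs : ω ∈ s) (hs' : ω' ∈ s) (hω : cellLabel B a' ω = cellLabel B a' ω') :
    EdgeFree s B a η ω' := by
  obtain ⟨hB, hfloor⟩ := Prod.mk.inj hω
  have hsame : ⌊a' ω⌋ = ⌊a ω⌋ := (h.floor_eq_iff hη hy ha hs rfl).mpr rfl
  have hω' : ⌊a ω'⌋ = ⌊a ω⌋ := (h.floor_eq_iff hη hy ha hs' hB.symm).mp (hfloor ▸ hsame)
  exact h.of_cellLabel_eq (Prod.ext hB hω'.symm)

lemma labelClass_shear_eq (h : EdgeFree s B a η ω) (hη : 2 * |c| ≤ η)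
    (hy : ∀ ω ∈ s, y ω ∈ Icc (0 : ℝ) 1) (ha : ∀ ω ∈ s, a' ω = a ω + c * y ω) (hs : ω ∈ s) :
    labelClass s (cellLabel B a') ω = labelClass s (cellLabel B a) ω := by
  ext ω'
  simp only [mem_labelClass, cellLabel, Prod.mk.injEq]
  refine and_congr_right fun hs' => and_congr_right fun hB => ?_
  rw [(h.floor_eq_iff hη hy ha hs rfl).mpr rfl]
  exact h.floor_eq_iff hη hy ha hs' hB

end EdgeFree

open Classical in
/-- The indicator function of the edge-free points, used as a weight that depends on both the
cells of `a` and those of its shear `a + c * y`. -/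
def edgeFreeWeight (s : Finset Ω) (B : Ω → κ) (a : Ω → ℝ) (η : ℝ) (ω : Ω) : ℝ :=
  if EdgeFree s B a η ω then 1 else 0

lemma edgeFreeWeight_mem_Icc : edgeFreeWeight s B a η ω ∈ Icc (0 : ℝ) 1 := by
  rw [edgeFreeWeight]
  split_ifs <;> simp

lemma factorsOn_edgeFreeWeight : FactorsOn s (cellLabel B a) (edgeFreeWeight s B a η) := by
  intro ω _ ω' _ h
  have hiff : EdgeFree s B a η ω ↔ EdgeFree s B a η ω' :=
    ⟨fun hω => hω.of_cellLabel_eq h, fun hω' => hω'.of_cellLabel_eq h.symm⟩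
  classical exact if_congr hiff rfl rfl

lemma factorsOn_edgeFreeWeight_shear (hη : 2 * |c| ≤ η) (hy : ∀ ω ∈ s, y ω ∈ Icc (0 : ℝ) 1)
    (ha : ∀ ω ∈ s, a' ω = a ω + c * y ω) :
    FactorsOn s (cellLabel B a') (edgeFreeWeight s B a η) := by
  intro ω hs ω' hs' h
  have hiff : EdgeFree s B a η ω ↔ EdgeFree s B a η ω' :=
    ⟨fun hω => hω.of_cellLabel_shear_eq hη hy ha hs hs' h,
      fun hω' => hω'.of_cellLabel_shear_eq hη hy ha hs' hs h.symm⟩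
  classical exact if_congr hiff rfl rfl

open Classical in
lemma classVar_sub_card_le_sum_edgeFreeWeight (hy : ∀ ω ∈ s, y ω ∈ Icc (0 : ℝ) 1) :
    classVar s (cellLabel B a) y - ({ω ∈ s | ¬ EdgeFree s B a η ω} : Finset Ω).card
      ≤ ∑ ω ∈ s, edgeFreeWeight s B a η ω * (y ω - classAvg s (cellLabel B a) y ω) ^ 2 := by
  rw [classVar, Finset.card_filter, sub_le_iff_le_add, Nat.cast_sum, ← Finset.sum_add_distrib]
  refine Finset.sum_le_sum fun ω hω => ?_
  by_cases h : EdgeFree s B a η ω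
  · simp [edgeFreeWeight, h]
  · simpa [edgeFreeWeight, h] using sub_sq_le_one (hy ω hω) (classAvg_mem_Icc hy)

lemma mul_sum_edgeFreeWeight_eq (hη : 2 * |c| ≤ η) (hy : ∀ ω ∈ s, y ω ∈ Icc (0 : ℝ) 1)
    (ha : ∀ ω ∈ s, a' ω = a ω + c * y ω) :
    c * ∑ ω ∈ s, edgeFreeWeight s B a η ω * (y ω - classAvg s (cellLabel B a) y ω) ^ 2
      = ∑ ω ∈ s, edgeFreeWeight s B a η ω * Int.fract (a' ω)
            * (y ω - classAvg s (cellLabel B a') y ω)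
        - ∑ ω ∈ s, edgeFreeWeight s B a η ω * Int.fract (a ω)
            * (y ω - classAvg s (cellLabel B a) y ω) := by
  set A := classAvg s (cellLabel B a) y with hA
  set W := edgeFreeWeight s B a η with hW
  have horth : ∑ ω ∈ s, W ω * A ω * (y ω - A ω) = 0 :=
    sum_mul_sub_classAvg (factorsOn_edgeFreeWeight.mul factorsOn_classAvg)
  calc c * ∑ ω ∈ s, W ω * (y ω - A ω) ^ 2
      = c * (∑ ω ∈ s, W ω * y ω * (y ω - A ω) - ∑ ω ∈ s, W ω * A ω * (y ω - A ω)) := by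
        rw [← Finset.sum_sub_distrib]
        congr 1
        exact Finset.sum_congr rfl fun ω _ => by ring
    _ = ∑ ω ∈ s, c * (W ω * y ω * (y ω - A ω)) := by rw [horth, sub_zero, Finset.mul_sum]
    _ = _ := by
      rw [← Finset.sum_sub_distrib]
      refine Finset.sum_congr rfl fun ω hω => ?_
      by_cases h : EdgeFree s B a η ω
      · have hfloor : ⌊a' ω⌋ = ⌊a ω⌋ := (h.floor_eq_iff hη hy ha hω rfl).mpr rfl
        have havg : classAvg s (cellLabel B a') y ω = A ω := by
          rw [hA, classAvg, classAvg, h.labelClass_shear_eq hη hy ha hω]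
        rw [havg, Int.fract, Int.fract, hfloor, ha ω hω]
        ring
      · simp only [hW, edgeFreeWeight, h, if_false, zero_mul, mul_zero, sub_zero]

open Classical in
/-- Since `c * y = a' - a`, the variance of `y` within the cells of `a` is a difference of
correlations with `fract a'` and `fract a`, each of which is controlled by the loss of variance
on refining the respective cells. -/
lemma abs_mul_classVar_sub_card_le (hN : 0 < N) (hη : 2 * |c| ≤ η)
    (hy : ∀ ω ∈ s, y ω ∈ Icc (0 : ℝ) 1) (ha : ∀ ω ∈ s, a' ω = a ω + c * y ω) :
    |c| * (classVar s (cellLabel B a) y - ({ω ∈ s | ¬ EdgeFree s B a η ω} : Finset Ω).card)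
      ≤ √(s.card * (classVar s (cellLabel B a) y - classVar s (cellLabel B fun ω => N * a ω) y))
        + √(s.card * (classVar s (cellLabel B a') y
            - classVar s (cellLabel B fun ω => N * a' ω) y))
        + 2 * (s.card / N) := by
  set S := ∑ ω ∈ s, edgeFreeWeight s B a η ω * (y ω - classAvg s (cellLabel B a) y ω) ^ 2
  have hS : 0 ≤ S := Finset.sum_nonneg fun ω _ => mul_nonneg edgeFreeWeight_mem_Icc.1 (sq_nonneg _)
  have hcorr := abs_sum_mul_fract_mul_sub_classAvg_le hN hy (fun _ _ => edgeFreeWeight_mem_Icc)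
    (factorsOn_edgeFreeWeight (B := B) (a := a) (η := η))
  have hcorr' := abs_sum_mul_fract_mul_sub_classAvg_le hN hy (fun _ _ => edgeFreeWeight_mem_Icc)
    (factorsOn_edgeFreeWeight_shear (B := B) hη hy ha)
  calc _ ≤ |c| * S := by
        gcongr
        exact classVar_sub_card_le_sum_edgeFreeWeight hy
    _ = |c * S| := by rw [abs_mul, abs_of_nonneg hS]
    _ ≤ _ := by
      rw [mul_sum_edgeFreeWeight_eq hη hy ha]
      exact (abs_sub _ _).trans (by linarith)

end Shear

/-! ### Counting lattice points -/

section LatticeCount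

lemma card_le_of_forall_abs_intCast_sub_le {T : Finset ℤ} {x D : ℝ} (hD : 0 ≤ D)
    (h : ∀ j ∈ T, |(j : ℝ) - x| ≤ D) : (T.card : ℝ) ≤ 2 * D + 1 := by
  have hsub : T ⊆ Finset.Icc ⌈x - D⌉ ⌊x + D⌋ := fun j hj => by
    have := abs_le.mp (h j hj)
    rw [Finset.mem_Icc, Int.ceil_le, Int.le_floor]
    constructor <;> linarith
  calc (T.card : ℝ) ≤ ((⌊x + D⌋ + 1 - ⌈x - D⌉).toNat : ℤ) := by
        exact_mod_cast (Finset.card_le_card hsub).trans (Int.card_Icc _ _).le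
    _ = max ((⌊x + D⌋ : ℝ) + 1 - ⌈x - D⌉) 0 := by
        rw [Int.toNat_eq_max]
        push_cast
        rfl
    _ ≤ 2 * D + 1 :=
        max_le (by linarith [Int.floor_le (x + D), Int.le_ceil (x - D)]) (by linarith)

lemma card_le_of_forall_abs_natCast_sub_le {T : Finset ℕ} {x D : ℝ} (hD : 0 ≤ D)
    (h : ∀ j ∈ T, |(j : ℝ) - x| ≤ D) : (T.card : ℝ) ≤ 2 * D + 1 := by
  rw [← Finset.card_map (Nat.castEmbedding (R := ℤ)) (s := T)]
  refine card_le_of_forall_abs_intCast_sub_le hD (x := x) fun j hj => ?_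
  obtain ⟨k, hk, rfl⟩ := Finset.mem_map.mp hj
  simpa using h k hk

lemma card_image_floor_le_of_forall_abs_sub_le {α : Type*} {A : Finset α} {f : α → ℝ} {x D : ℝ}
    (hD : 0 ≤ D) (h : ∀ p ∈ A, |f p - x| ≤ D) :
    ((A.image fun p => ⌊f p⌋).card : ℝ) ≤ 2 * D + 2 := by
  calc ((A.image fun p => ⌊f p⌋).card : ℝ) ≤ 2 * (D + 1 / 2) + 1 := by
        refine card_le_of_forall_abs_intCast_sub_le (x := x - 1 / 2) (by positivity) fun k hk => ?_
        obtain ⟨p, hp, rfl⟩ := Finset.mem_image.mp hk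
        have hfp := abs_le.mp (h p hp)
        rw [abs_le]
        constructor <;> linarith [Int.floor_le (f p), Int.lt_floor_add_one (f p)]
    _ = 2 * D + 2 := by ring

lemma card_filter_abs_sub_le {K N : ℕ} (hK : 0 < K) (hN : 0 < N) (t u : ℝ) {δ : ℝ}
    (hδ : 0 ≤ δ) :
    (({j ∈ Finset.range N | |t + K * ((j : ℝ) / N) - u| ≤ δ} : Finset ℕ).card : ℝ)
      ≤ 2 * (δ * (N / K)) + 1 := by
  have : (0 : ℝ) < K := Nat.cast_pos.mpr hK
  have : (0 : ℝ) < N := Nat.cast_pos.mpr hN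
  refine card_le_of_forall_abs_natCast_sub_le (x := (u - t) * (N / K)) (by positivity)
    fun j hj => ?_
  have hscale : (j : ℝ) - (u - t) * (N / K) = (t + K * ((j : ℝ) / N) - u) * (N / K) := by
    field_simp
    ring
  rw [hscale, abs_mul, abs_of_nonneg (by positivity : (0 : ℝ) ≤ N / K)]
  gcongr
  exact (Finset.mem_filter.mp hj).2

open Classical in
lemma card_filter_exists_int_abs_sub_le {K N : ℕ} (hK : 0 < K) (hN : 0 < N) (t : ℝ) {δ : ℝ}
    (hδ : 0 ≤ δ) :
    (({j ∈ Finset.range N | ∃ m : ℤ, |t + K * ((j : ℝ) / N) - m| ≤ δ} : Finset ℕ).card : ℝ)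
      ≤ N * (3 * (2 * δ + K / N)) := by
  have hN' : (0 : ℝ) < N := Nat.cast_pos.mpr hN
  have hK' : (1 : ℝ) ≤ K := Nat.one_le_cast.mpr hK
  rcases le_or_gt (1 / 2) δ with hδ' | hδ'
  · calc _ ≤ (N : ℝ) := by exact_mod_cast (Finset.card_filter_le _ _).trans_eq (Finset.card_range N)
      _ ≤ _ := le_mul_of_one_le_right hN'.le (by
        have : (0 : ℝ) ≤ K / N := by positivity
        linarith)
  set M : Finset ℤ := Finset.Icc ⌈t - δ⌉ ⌊t + K + δ⌋ with hM
  set G : ℤ → Finset ℕ := fun m => {j ∈ Finset.range N | |t + K * ((j : ℝ) / N) - m| ≤ δ}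
  have hMcard : (M.card : ℝ) ≤ 3 * K := by
    have : (M.card : ℝ) ≤ 2 * (K / 2 + δ) + 1 := by
      refine card_le_of_forall_abs_intCast_sub_le (x := t + K / 2) (by positivity) fun m hm => ?_
      rw [hM, Finset.mem_Icc, Int.ceil_le, Int.le_floor] at hm
      rw [abs_le]
      constructor <;> linarith [hm.1, hm.2]
    linarith
  have hcover : ({j ∈ Finset.range N | ∃ m : ℤ, |t + K * ((j : ℝ) / N) - m| ≤ δ} : Finset ℕ)
      ⊆ M.biUnion G := by
    intro j hj
    obtain ⟨hjN, m, hm⟩ := Finset.mem_filter.mp hj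
    refine Finset.mem_biUnion.mpr ⟨m, ?_, Finset.mem_filter.mpr ⟨hjN, hm⟩⟩
    have hj₁ : (j : ℝ) / N ≤ 1 :=
      (div_le_one hN').mpr (Nat.cast_le.mpr (Finset.mem_range.mp hjN).le)
    have hj₀ : (0 : ℝ) ≤ (j : ℝ) / N := by positivity
    rw [hM, Finset.mem_Icc, Int.ceil_le, Int.le_floor]
    constructor <;> nlinarith [abs_le.mp hm]
  calc _ ≤ ((M.biUnion G).card : ℝ) := by exact_mod_cast Finset.card_le_card hcover
    _ ≤ ∑ m ∈ M, ((G m).card : ℝ) := by exact_mod_cast Finset.card_biUnion_le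
    _ ≤ M.card * (2 * (δ * (N / K)) + 1) :=
        (Finset.sum_le_card_nsmul M _ _ fun m _ =>
          card_filter_abs_sub_le hK hN t m hδ).trans_eq (nsmul_eq_mul _ _)
    _ ≤ 3 * K * (2 * (δ * (N / K)) + 1) := by gcongr
    _ = N * (3 * (2 * δ + K / N)) := by field_simp

end LatticeCount

/-! ### The random rescaling of a planar set -/

/-- Triples `(p, i, j)`: a point of `P`, a scale `b ^ (-i)` and a horizontal shift `j / 2 ^ n`. -/
def scaleSpace (P : Finset (ℝ × ℝ)) (n : ℕ) : Finset ((ℝ × ℝ) × ℕ × ℕ) :=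
  P ×ˢ (Finset.range n ×ˢ Finset.range (2 ^ n))

/-- The second coordinate of the rescaled point, modulo one. -/
def scaleFract (b : ℕ) (ω : (ℝ × ℝ) × ℕ × ℕ) : ℝ := Int.fract ((b : ℝ) ^ ω.2.1 * ω.1.2)

/-- The scale, the shift and the horizontal strip of height one containing the rescaled point. -/
def scaleLabel (b : ℕ) (ω : (ℝ × ℝ) × ℕ × ℕ) : ℕ × ℕ × ℤ :=
  (ω.2.1, ω.2.2, ⌊(b : ℝ) ^ ω.2.1 * ω.1.2⌋)

/-- The shifted projection, in direction `e`, of the rescaled point in its strip, in units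
of `2 ^ (-l)`. -/
def scaleProj (b n : ℕ) (e : ℝ) (l : ℕ) (ω : (ℝ × ℝ) × ℕ × ℕ) : ℝ :=
  2 ^ l * ((b : ℝ) ^ ω.2.1 * ω.1.1 + e * scaleFract b ω + (ω.2.2 : ℝ) / 2 ^ n)

/-- The mean conditional variance of the second coordinate in its strip, given the strip and the
projection in direction `e` at resolution `2 ^ (-l)`. -/
def condVar (b n : ℕ) (P : Finset (ℝ × ℝ)) (e : ℝ) (l : ℕ) : ℝ :=
  classVar (scaleSpace P n) (cellLabel (scaleLabel b) (scaleProj b n e l)) (scaleFract b)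
    / (scaleSpace P n).card

/-- The projection of `P` in direction `e` has at most `C (ρ / ρ') ^ s` pieces of size `ρ'` in
each interval of size `ρ`, for all scales above `b ^ (-n)`. -/
def ProjHomogeneous (b n : ℕ) (P : Finset (ℝ × ℝ)) (C s e : ℝ) : Prop :=
  ∀ t ρ ρ' : ℝ, ((b : ℝ) ^ n)⁻¹ ≤ ρ' → ρ' ≤ ρ → ∃ S : Finset ℝ,
    (∀ p ∈ P, |p.1 + e * p.2 - t| ≤ ρ → ∃ q ∈ S, |p.1 + e * p.2 - q| ≤ ρ') ∧
    (S.card : ℝ) ≤ C * (ρ / ρ') ^ s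

/-- A bound for the proportion of points whose projection, at resolution `2 ^ (-L)`, is within
`2 * 2 ^ (-w)` of the edge of a cell, for a set with homogeneous projection. -/
def edgeBound (n : ℕ) (C s : ℝ) (L w : ℕ) : ℝ :=
  C * (2 * 2 ^ w) ^ s * (3 * (2 * (3 / 2 ^ w) + 2 ^ L / 2 ^ n)) + ((L + w : ℕ) : ℝ) / n

section CondVar

variable {b n : ℕ} {P : Finset (ℝ × ℝ)} {C s e e' : ℝ} {l L v w : ℕ}

lemma scaleFract_mem_Icc (ω : (ℝ × ℝ) × ℕ × ℕ) : scaleFract b ω ∈ Icc (0 : ℝ) 1 :=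
  ⟨Int.fract_nonneg _, (Int.fract_lt_one _).le⟩

lemma card_scaleSpace : (scaleSpace P n).card = P.card * (n * 2 ^ n) := by
  simp [scaleSpace]

lemma scaleProj_add (l v : ℕ) :
    scaleProj b n e (l + v) = fun ω => ((2 ^ v : ℕ) : ℝ) * scaleProj b n e l ω := by
  ext ω
  simp only [scaleProj, pow_add, Nat.cast_pow, Nat.cast_ofNat]
  ring

lemma scaleProj_eq_add (e e' : ℝ) (l : ℕ) (ω : (ℝ × ℝ) × ℕ × ℕ) :
    scaleProj b n e' l ω = scaleProj b n e l ω + 2 ^ l * (e' - e) * scaleFract b ω := by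
  simp only [scaleProj]
  ring

lemma scaleProj_mk (e : ℝ) (l : ℕ) (p : ℝ × ℝ) (i j : ℕ) :
    scaleProj b n e l (p, i, j) = 2 ^ l * ((b : ℝ) ^ i * (p.1 + e * p.2)
      - e * ⌊(b : ℝ) ^ i * p.2⌋) + 2 ^ l * ((j : ℝ) / 2 ^ n) := by
  simp only [scaleProj, scaleFract, Int.fract]
  ring

lemma condVar_nonneg : 0 ≤ condVar b n P e l := div_nonneg classVar_nonneg (Nat.cast_nonneg _)

lemma condVar_le_one : condVar b n P e l ≤ 1 := by
  refine div_le_one_of_le₀ ?_ (Nat.cast_nonneg _)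
  calc _ ≤ ∑ ω ∈ scaleSpace P n, (scaleFract b ω - 0) ^ 2 :=
        classVar_le_sum_sub_sq fun _ _ _ _ _ => rfl
    _ ≤ (scaleSpace P n).card := by
        simpa using Finset.sum_le_card_nsmul (scaleSpace P n) _ 1 fun ω _ =>
          sub_sq_le_one (scaleFract_mem_Icc (b := b) ω) ⟨le_rfl, zero_le_one⟩

lemma factorsOn_cellLabel_scaleProj_add {s : Finset ((ℝ × ℝ) × ℕ × ℕ)} :
    FactorsOn s (cellLabel (scaleLabel b) (scaleProj b n e (l + v)))
      (cellLabel (scaleLabel b) (scaleProj b n e l)) := by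
  rw [scaleProj_add]
  exact factorsOn_cellLabel_natCast_mul (by positivity)

lemma condVar_antitone : Antitone (condVar b n P e) := by
  refine antitone_nat_of_succ_le fun l => ?_
  unfold condVar
  gcongr
  exact classVar_le_of_factorsOn factorsOn_cellLabel_scaleProj_add

lemma card_filter_range_lt_add_le (n K : ℕ) :
    ({i ∈ Finset.range n | n < i + K} : Finset ℕ).card ≤ K := by
  have hsub : ({i ∈ Finset.range n | n < i + K} : Finset ℕ) ⊆ Finset.Ico (n - K) n := by
    intro i hi
    simp only [Finset.mem_filter, Finset.mem_range, Finset.mem_Ico] at hi ⊢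
    lia
  calc _ ≤ _ := Finset.card_le_card hsub
    _ ≤ K := by rw [Nat.card_Ico]; lia

/-- An event whose probability over the random shift is at most `M`, except possibly at the `K`
finest scales, has probability at most `M + K / n`. -/
lemma card_filter_scaleSpace_le {Q : (ℝ × ℝ) × ℕ × ℕ → Prop} [DecidablePred Q] (K : ℕ) {M : ℝ}
    (hM : 0 ≤ M) (h : ∀ p ∈ P, ∀ i, i + K ≤ n →
      (({j ∈ Finset.range (2 ^ n) | Q (p, i, j)} : Finset ℕ).card : ℝ) ≤ 2 ^ n * M) :
    (({ω ∈ scaleSpace P n | Q ω} : Finset _).card : ℝ) / (scaleSpace P n).card ≤ M + K / n := by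
  rcases n.eq_zero_or_pos with rfl | hn
  · simpa [scaleSpace] using hM
  set cnt : ℝ × ℝ → ℕ → ℝ := fun p i =>
    (({j ∈ Finset.range (2 ^ n) | Q (p, i, j)} : Finset ℕ).card : ℝ) with hcnt
  have hfiber : ∀ p ∈ P, ∀ i, cnt p i ≤ 2 ^ n * M + if n < i + K then (2 : ℝ) ^ n else 0 := by
    intro p hp i
    split_ifs with hi
    · have htriv : cnt p i ≤ 2 ^ n := by
        simpa [hcnt] using (Nat.cast_le (α := ℝ)).mpr (Finset.card_filter_le (Finset.range (2 ^ n))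
          fun j => Q (p, i, j))
      exact htriv.trans (le_add_of_nonneg_left (by positivity))
    · simpa using h p hp i (not_lt.mp hi)
  have hscales : ∀ p ∈ P, ∑ i ∈ Finset.range n, cnt p i ≤ n * 2 ^ n * M + K * 2 ^ n := by
    intro p hp
    refine (Finset.sum_le_sum fun i _ => hfiber p hp i).trans ?_
    rw [Finset.sum_add_distrib, ← Finset.sum_filter, Finset.sum_const, Finset.sum_const,
      Finset.card_range, nsmul_eq_mul, nsmul_eq_mul, ← mul_assoc]
    gcongr
    exact card_filter_range_lt_add_le n K
  refine div_le_of_le_mul₀ (Nat.cast_nonneg _) (by positivity) ?_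
  calc (({ω ∈ scaleSpace P n | Q ω} : Finset _).card : ℝ)
      = ∑ p ∈ P, ∑ i ∈ Finset.range n, cnt p i := by
        simp only [hcnt, Finset.card_filter, scaleSpace, Finset.sum_product, Nat.cast_sum]
    _ ≤ P.card * (n * 2 ^ n * M + K * 2 ^ n) :=
        (Finset.sum_le_card_nsmul _ _ _ hscales).trans_eq (nsmul_eq_mul _ _)
    _ = (M + K / n) * (scaleSpace P n).card := by
        rw [card_scaleSpace]
        push_cast
        field_simp

lemma exists_int_abs_sub_le_of_floor_ne {x y : ℝ} (h : ⌊x⌋ ≠ ⌊y⌋) :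
    ∃ m : ℤ, |y - m| ≤ |x - y| := by
  rcases lt_or_gt_of_ne h with h | h
  · have hx := Int.floor_lt.mp h
    have hy := Int.floor_le y
    refine ⟨⌊y⌋, ?_⟩
    rw [abs_of_nonneg (by linarith), abs_of_nonpos (by linarith)]
    linarith
  · have hx := Int.floor_le x
    have hy := Int.floor_lt.mp h
    refine ⟨⌊x⌋, ?_⟩
    rw [abs_of_nonpos (by linarith), abs_of_nonneg (by linarith)]
    linarith

open Classical in
lemma card_filter_shift_abs_sub_le (t : ℝ) {δ : ℝ} (hδ : 0 ≤ δ) :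
    (({j ∈ Finset.range (2 ^ n) | ∃ m : ℤ, |t + 2 ^ l * ((j : ℝ) / 2 ^ n) - m| ≤ δ} :
      Finset ℕ).card : ℝ) ≤ 2 ^ n * (3 * (2 * δ + 2 ^ l / 2 ^ n)) := by
  have h := card_filter_exists_int_abs_sub_le (K := 2 ^ l) (N := 2 ^ n) (by positivity)
    (by positivity) t hδ
  push_cast at h
  exact h

lemma condVar_le_condVar_add (e e' : ℝ) :
    condVar b n P e' l ≤ condVar b n P e l + 3 * (2 * (2 ^ l * |e' - e|) + 2 ^ l / 2 ^ n) := by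
  classical
  set Q : (ℝ × ℝ) × ℕ × ℕ → Prop := fun ω =>
    cellLabel (scaleLabel b) (scaleProj b n e' l) ω ≠ cellLabel (scaleLabel b) (scaleProj b n e l) ω
  have hchange : (({ω ∈ scaleSpace P n | Q ω} : Finset _).card : ℝ) / (scaleSpace P n).card
      ≤ 3 * (2 * (2 ^ l * |e' - e|) + 2 ^ l / 2 ^ n) := by
    refine (card_filter_scaleSpace_le 0 (by positivity) fun p _ i _ => le_trans ?_
      (card_filter_shift_abs_sub_le (n := n) (l := l)
        (2 ^ l * ((b : ℝ) ^ i * (p.1 + e * p.2) - e * ⌊(b : ℝ) ^ i * p.2⌋))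
        (by positivity : (0 : ℝ) ≤ 2 ^ l * |e' - e|))).trans_eq (by simp)
    refine Nat.cast_le.mpr (Finset.card_le_card fun j hj => ?_)
    obtain ⟨hj, hne⟩ := Finset.mem_filter.mp hj
    obtain ⟨m, hm⟩ := exists_int_abs_sub_le_of_floor_ne fun h => hne (Prod.ext rfl h)
    refine Finset.mem_filter.mpr ⟨hj, m, ?_⟩
    rw [scaleProj_eq_add e e', scaleProj_mk, add_sub_cancel_left] at hm
    refine hm.trans ?_
    rw [abs_mul, abs_mul, abs_of_nonneg (scaleFract_mem_Icc _).1,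
      abs_of_pos (by positivity : (0 : ℝ) < 2 ^ l)]
    exact mul_le_of_le_one_right (by positivity) (scaleFract_mem_Icc _).2
  calc condVar b n P e' l
      ≤ condVar b n P e l
          + (({ω ∈ scaleSpace P n | Q ω} : Finset _).card : ℝ) / (scaleSpace P n).card := by
        unfold condVar
        rw [← add_div]
        gcongr
        exact classVar_le_add_card_ne fun ω _ => scaleFract_mem_Icc ω
    _ ≤ _ := by gcongr

lemma exists_near_int_of_not_edgeFree {Ω κ : Type*} {s : Finset Ω} {B : Ω → κ} {a : Ω → ℝ} {η : ℝ}
    {ω : Ω} (h : ¬ EdgeFree s B a η ω) :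
    ∃ ω' ∈ s, B ω' = B ω ∧ |a ω' - a ω| ≤ 1 + η ∧ ∃ m : ℤ, |a ω' - m| ≤ η := by
  have hfloor := Int.floor_le (a ω)
  have hlt := Int.lt_floor_add_one (a ω)
  simp only [EdgeFree, not_forall, not_and_or, not_lt] at h
  obtain ⟨ω', hω', hB, hm | hm⟩ := h
  · refine ⟨ω', hω', hB, ?_, _, hm⟩
    rw [abs_le] at hm ⊢
    constructor <;> linarith [hm.1, hm.2]
  · refine ⟨ω', hω', hB, ?_, ⌊a ω⌋ + 1, by exact_mod_cast hm⟩
    rw [abs_le] at hm ⊢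
    constructor <;> linarith [hm.1, hm.2]

lemma exists_near_int_of_not_edgeFree_shift {S : Finset ℝ} {p : ℝ × ℝ} {i j : ℕ} (hb : 0 < b)
    (hw : 1 ≤ w)
    (hS : ∀ p' ∈ P, 2 ^ L * (b : ℝ) ^ i * |p'.1 + e * p'.2 - (p.1 + e * p.2)| ≤ 2 →
      ∃ q ∈ S, 2 ^ L * (b : ℝ) ^ i * |p'.1 + e * p'.2 - q| ≤ 1 / 2 ^ w)
    (hedge : ¬ EdgeFree (scaleSpace P n) (scaleLabel b) (scaleProj b n e L) (2 / 2 ^ w)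
      (p, i, j)) :
    ∃ q ∈ S, ∃ m : ℤ, |2 ^ L * ((b : ℝ) ^ i * q - e * ⌊(b : ℝ) ^ i * p.2⌋)
      + 2 ^ L * ((j : ℝ) / 2 ^ n) - m| ≤ 3 / 2 ^ w := by
  have hη : (2 : ℝ) / 2 ^ w ≤ 1 :=
    div_le_one_of_le₀ (by simpa using pow_le_pow_right₀ one_le_two hw) (by positivity)
  obtain ⟨⟨p', i', j'⟩, hω', hB, hnear, m, hm⟩ := exists_near_int_of_not_edgeFree hedge
  simp only [scaleLabel, Prod.mk.injEq] at hB
  obtain ⟨rfl, rfl, hstrip⟩ := hB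
  have hK : (0 : ℝ) < 2 ^ L * (b : ℝ) ^ i' := by positivity
  rw [scaleProj_mk, scaleProj_mk, hstrip] at hnear
  rw [scaleProj_mk, hstrip] at hm
  obtain ⟨q, hq, hpq⟩ := hS p' (Finset.mem_product.mp hω').1 (by
    rw [← abs_of_pos hK, ← abs_mul]
    refine le_trans (le_of_eq (congrArg abs ?_)) (hnear.trans (by linarith))
    ring)
  rw [← abs_of_pos hK, ← abs_mul] at hpq
  refine ⟨q, hq, m, ?_⟩
  calc _ = |(2 ^ L * ((b : ℝ) ^ i' * (p'.1 + e * p'.2) - e * ⌊(b : ℝ) ^ i' * p.2⌋)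
          + 2 ^ L * ((j' : ℝ) / 2 ^ n) - m)
          - 2 ^ L * (b : ℝ) ^ i' * (p'.1 + e * p'.2 - q)| := by
        congr 1
        ring
    _ ≤ 2 / 2 ^ w + 1 / 2 ^ w := (abs_sub _ _).trans (add_le_add hm hpq)
    _ = 3 / 2 ^ w := by ring

namespace ProjHomogeneous

lemma mono {C' : ℝ} (hP : ProjHomogeneous b n P C s e) (hC : C ≤ C') :
    ProjHomogeneous b n P C' s e := by
  intro t ρ ρ' hρ' hρ
  obtain ⟨S, hS, hcard⟩ := hP t ρ ρ' hρ' hρ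
  have hρ₀ : 0 ≤ ρ' := le_trans (by positivity) hρ'
  have hratio : 0 ≤ ρ / ρ' := div_nonneg (hρ₀.trans hρ) hρ₀
  exact ⟨S, hS, hcard.trans (by gcongr)⟩

lemma nonneg (hP : ProjHomogeneous b n P C s e) : 0 ≤ C := by
  have hpos : (0 : ℝ) < ((b : ℝ) ^ n)⁻¹ + 1 := by positivity
  obtain ⟨S, -, hS⟩ := hP 0 _ _ (le_add_of_nonneg_right zero_le_one) le_rfl
  rw [div_self hpos.ne', Real.one_rpow, mul_one] at hS
  exact (Nat.cast_nonneg _).trans hS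

lemma edgeBound_nonneg (hP : ProjHomogeneous b n P C s e) : 0 ≤ edgeBound n C s L w := by
  have := hP.nonneg
  unfold edgeBound
  positivity

lemma exists_cover (hP : ProjHomogeneous b n P C s e) (hb : 2 ≤ b) {i : ℕ} (hi : i + (L + w) ≤ n)
    (t : ℝ) :
    ∃ S : Finset ℝ, (S.card : ℝ) ≤ C * (2 * 2 ^ w) ^ s ∧
      ∀ p ∈ P, 2 ^ L * (b : ℝ) ^ i * |p.1 + e * p.2 - t| ≤ 2 →
        ∃ q ∈ S, 2 ^ L * (b : ℝ) ^ i * |p.1 + e * p.2 - q| ≤ 1 / 2 ^ w := by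
  have hb₂ : (2 : ℝ) ≤ b := by exact_mod_cast hb
  have hK : (0 : ℝ) < 2 ^ L * (b : ℝ) ^ i := by positivity
  have hfine : ((b : ℝ) ^ n)⁻¹ ≤ 1 / 2 ^ w / (2 ^ L * (b : ℝ) ^ i) := by
    rw [div_div, one_div]
    apply inv_anti₀ (by positivity)
    calc (2 : ℝ) ^ w * (2 ^ L * (b : ℝ) ^ i) ≤ (b : ℝ) ^ w * ((b : ℝ) ^ L * (b : ℝ) ^ i) := by
          gcongr
      _ = (b : ℝ) ^ (i + (L + w)) := by ring
      _ ≤ (b : ℝ) ^ n := pow_le_pow_right₀ (by linarith) hi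
  have hle : 1 / 2 ^ w / (2 ^ L * (b : ℝ) ^ i) ≤ 2 / (2 ^ L * (b : ℝ) ^ i) := by
    gcongr
    exact (div_le_one_of_le₀ (one_le_pow₀ one_le_two) (by positivity)).trans one_le_two
  have hratio : 2 / (2 ^ L * (b : ℝ) ^ i) / (1 / 2 ^ w / (2 ^ L * (b : ℝ) ^ i)) = 2 * 2 ^ w := by
    field_simp
  obtain ⟨S, hS, hcard⟩ := hP t _ _ hfine hle
  rw [hratio] at hcard
  simp only [le_div_iff₀' hK] at hS
  exact ⟨S, hcard, hS⟩

open Classical in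
lemma card_not_edgeFree_shift_le (hP : ProjHomogeneous b n P C s e) (hb : 2 ≤ b) (hw : 1 ≤ w)
    (p : ℝ × ℝ) {i : ℕ} (hi : i + (L + w) ≤ n) :
    (({j ∈ Finset.range (2 ^ n) | ¬ EdgeFree (scaleSpace P n) (scaleLabel b)
        (scaleProj b n e L) (2 / 2 ^ w) (p, i, j)} : Finset ℕ).card : ℝ)
      ≤ 2 ^ n * (C * (2 * 2 ^ w) ^ s * (3 * (2 * (3 / 2 ^ w) + 2 ^ L / 2 ^ n))) := by
  obtain ⟨S, hcard, hS⟩ := hP.exists_cover hb hi (p.1 + e * p.2)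
  set T : ℝ → Finset ℕ := fun q => {j ∈ Finset.range (2 ^ n) | ∃ m : ℤ,
    |2 ^ L * ((b : ℝ) ^ i * q - e * ⌊(b : ℝ) ^ i * p.2⌋) + 2 ^ L * ((j : ℝ) / 2 ^ n) - m|
      ≤ 3 / 2 ^ w}
  have hcover : ({j ∈ Finset.range (2 ^ n) | ¬ EdgeFree (scaleSpace P n) (scaleLabel b)
      (scaleProj b n e L) (2 / 2 ^ w) (p, i, j)} : Finset ℕ) ⊆ S.biUnion T := fun j hj => by
    obtain ⟨hjn, hedge⟩ := Finset.mem_filter.mp hj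
    obtain ⟨q, hq, hqm⟩ := exists_near_int_of_not_edgeFree_shift (by omega) hw hS hedge
    exact Finset.mem_biUnion.mpr ⟨q, hq, Finset.mem_filter.mpr ⟨hjn, hqm⟩⟩
  calc _ ≤ ((S.biUnion T).card : ℝ) := Nat.cast_le.mpr (Finset.card_le_card hcover)
    _ ≤ ∑ q ∈ S, ((T q).card : ℝ) := by exact_mod_cast Finset.card_biUnion_le
    _ ≤ S.card * (2 ^ n * (3 * (2 * (3 / 2 ^ w) + 2 ^ L / 2 ^ n))) :=
        (Finset.sum_le_card_nsmul _ _ _ fun q _ =>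
          card_filter_shift_abs_sub_le _ (by positivity)).trans_eq (nsmul_eq_mul _ _)
    _ ≤ C * (2 * 2 ^ w) ^ s * (2 ^ n * (3 * (2 * (3 / 2 ^ w) + 2 ^ L / 2 ^ n))) := by gcongr
    _ = _ := by ring

open Classical in
lemma card_not_edgeFree_le (hP : ProjHomogeneous b n P C s e) (hb : 2 ≤ b) (hw : 1 ≤ w) :
    (({ω ∈ scaleSpace P n | ¬ EdgeFree (scaleSpace P n) (scaleLabel b) (scaleProj b n e L)
      (2 / 2 ^ w) ω} : Finset _).card : ℝ) / (scaleSpace P n).card ≤ edgeBound n C s L w := by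
  have hC := hP.nonneg
  exact card_filter_scaleSpace_le (L + w) (by positivity) fun p _ i hi =>
    hP.card_not_edgeFree_shift_le hb hw p hi

lemma mul_condVar_sub_edgeBound_le (hP : ProjHomogeneous b n P C s e) (hb : 2 ≤ b) (hw : 1 ≤ w)
    (v : ℕ) (he : 2 ^ L * |e' - e| ≤ 1 / 2 ^ w) :
    2 ^ L * |e' - e| * (condVar b n P e L - edgeBound n C s L w)
      ≤ √(condVar b n P e L - condVar b n P e (L + v))
        + √(condVar b n P e' L - condVar b n P e' (L + v)) + 2 / 2 ^ v := by
  classical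
  set N : ℝ := ((scaleSpace P n).card : ℝ) with hN
  have hedge := hP.edgeBound_nonneg (L := L) (w := w)
  obtain hN₀ | hN₀ : 0 = N ∨ 0 < N := (Nat.cast_nonneg _).eq_or_lt
  · have hzero : ∀ e l, condVar b n P e l = 0 := fun e l => by
      rw [condVar, ← hN, ← hN₀, div_zero]
    simp only [hzero, zero_sub, mul_neg]
    exact (neg_nonpos.mpr (by positivity)).trans (by positivity)
  have hclassVar : ∀ e l, classVar (scaleSpace P n) (cellLabel (scaleLabel b) (scaleProj b n e l))
      (scaleFract b) = N * condVar b n P e l := fun e l => by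
    rw [condVar, mul_div_cancel₀ _ hN₀.ne']
  have hsqrt : ∀ x : ℝ, √(N * (N * x)) = N * √x := fun x => by
    rw [← mul_assoc, Real.sqrt_mul (by positivity), Real.sqrt_mul_self hN₀.le]
  have hc : |2 ^ L * (e' - e)| = 2 ^ L * |e' - e| := by
    rw [abs_mul, abs_of_pos (by positivity)]
  set bad : ℝ := (({ω ∈ scaleSpace P n | ¬ EdgeFree (scaleSpace P n) (scaleLabel b)
    (scaleProj b n e L) (2 / 2 ^ w) ω} : Finset _).card : ℝ)
  have hbad : bad / N ≤ edgeBound n C s L w := hP.card_not_edgeFree_le hb hw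
  have hshear : |2 ^ L * (e' - e)| * (_ - bad) ≤ _ :=
    abs_mul_classVar_sub_card_le (s := scaleSpace P n) (N := 2 ^ v) (by positivity)
      (by rw [hc, ← mul_one_div 2]; gcongr) (fun ω _ => scaleFract_mem_Icc ω)
      fun ω _ => scaleProj_eq_add e e' L ω
  simp only [← scaleProj_add, hclassVar, ← mul_sub, ← hN, hsqrt, hc] at hshear
  refine le_of_mul_le_mul_left ?_ hN₀
  calc N * (2 ^ L * |e' - e| * (condVar b n P e L - edgeBound n C s L w))
      ≤ N * (2 ^ L * |e' - e| * (condVar b n P e L - bad / N)) := by gcongr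
    _ = 2 ^ L * |e' - e| * (N * condVar b n P e L - bad) := by field_simp
    _ ≤ _ := hshear
    _ = _ := by push_cast; ring

end ProjHomogeneous

end CondVar

/-! ### The entropy of a labelling -/

/-- The sum of the logarithms of the class sizes of the labelling `g` of `P`, i.e. `P.card` times
the entropy of the uniform distribution on `P` conditioned on `g`. -/
def classEntropy {α γ : Type*} (P : Finset α) (g : α → γ) : ℝ :=
  ∑ p ∈ P, Real.log (labelClass P g p).card

section ClassEntropy

variable {α γ γ' δ : Type*} {P A : Finset α} {g : α → γ} {g' : α → γ'} {f a : α → ℝ} {M : α → ℤ}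
  {b : ℕ}

lemma classEntropy_le_add_sum_neg_log {W : α → ℝ} (hW : ∀ p ∈ P, 0 < W p)
    (hsum : ∀ p ∈ P, ∑ q ∈ labelClass P g p, W q / (labelClass P g' q).card ≤ 1) :
    classEntropy P g ≤ classEntropy P g' + ∑ p ∈ P, -Real.log (W p) := by
  have hlog : ∀ p ∈ P, Real.log (labelClass P g p).card ≤ Real.log (labelClass P g' p).card
      + -Real.log (W p) + (∑ _q ∈ labelClass P g p, W p / (labelClass P g' p).card - 1) := by
    intro p hp
    have hN : (0 : ℝ) < (labelClass P g p).card := Nat.cast_pos.mpr (labelClass_card_pos hp)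
    have hN' : (0 : ℝ) < (labelClass P g' p).card := Nat.cast_pos.mpr (labelClass_card_pos hp)
    have hWp := hW p hp
    have h := Real.log_le_sub_one_of_pos
      (by positivity : 0 < (labelClass P g p).card * (W p / (labelClass P g' p).card))
    rw [Real.log_mul hN.ne' (by positivity), Real.log_div hWp.ne' hN'.ne'] at h
    rw [Finset.sum_const, nsmul_eq_mul]
    linarith
  have hcomm : ∑ p ∈ P, (∑ _q ∈ labelClass P g p, W p / (labelClass P g' p).card - 1) ≤ 0 := by
    rw [Finset.sum_sub_distrib, sum_labelClass_comm, ← Finset.sum_sub_distrib]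
    exact Finset.sum_nonpos fun p hp => sub_nonpos.mpr (hsum p hp)
  calc classEntropy P g ≤ _ := Finset.sum_le_sum hlog
    _ ≤ classEntropy P g' + ∑ p ∈ P, -Real.log (W p) := by
        rw [Finset.sum_add_distrib, Finset.sum_add_distrib]
        exact add_le_of_nonpos_right hcomm

lemma sum_inv_card_labelClass_le [DecidableEq δ] (hA : A ⊆ P) {D : α → δ}
    (hD : FactorsOn A D g') :
    ∑ p ∈ A, ((labelClass P g' p).card : ℝ)⁻¹ ≤ (A.image D).card := by
  rw [← Finset.sum_fiberwise_of_maps_to fun p hp => Finset.mem_image_of_mem D hp]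
  refine (Finset.sum_le_card_nsmul _ _ 1 fun z hz => ?_).trans_eq (by simp)
  obtain ⟨p₀, hp₀, rfl⟩ := Finset.mem_image.mp hz
  have hpos : 0 < ({p ∈ A | D p = D p₀} : Finset α).card :=
    Finset.card_pos.mpr ⟨p₀, Finset.mem_filter.mpr ⟨hp₀, rfl⟩⟩
  refine (Finset.sum_le_card_nsmul _ _ (({p ∈ A | D p = D p₀} : Finset α).card : ℝ)⁻¹
    fun p hp => ?_).trans_eq (by rw [nsmul_eq_mul, mul_inv_cancel₀ (Nat.cast_pos.mpr hpos).ne'])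
  gcongr
  intro q hq
  rw [Finset.mem_filter] at hp hq
  exact mem_labelClass.mpr ⟨hA hq.1, hD q hq.1 p hp.1 (hq.2.trans hp.2.symm)⟩

lemma FactorsOn.labelClass {D : α → δ} (h : FactorsOn P (fun p => (g p, D p)) g') (p₀ : α) :
    FactorsOn (labelClass P g p₀) D g' := by
  intro p hp q hq hD
  obtain ⟨hp, hpg⟩ := mem_labelClass.mp hp
  obtain ⟨hq, hqg⟩ := mem_labelClass.mp hq
  exact h p hp q hq (Prod.ext (hpg.trans hqg.symm) hD)

lemma sum_inv_card_labelClass_labelClass_le [DecidableEq δ] {D : α → δ}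
    (hD : FactorsOn P (fun p => (g p, D p)) g') (p₀ : α) :
    ∑ p ∈ labelClass P g p₀, ((labelClass P g' p).card : ℝ)⁻¹
      ≤ ((labelClass P g p₀).image D).card :=
  sum_inv_card_labelClass_le labelClass_subset (hD.labelClass p₀)

lemma classEntropy_le_add_card_mul_log [DecidableEq δ] {D : α → δ} {K : ℝ}
    (hD : FactorsOn P (fun p => (g p, D p)) g')
    (hK : ∀ p ∈ P, (((labelClass P g p).image D).card : ℝ) ≤ K) :
    classEntropy P g ≤ classEntropy P g' + P.card * Real.log K := by
  have hKpos : ∀ p ∈ P, 0 < K := fun p hp =>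
    (Nat.cast_pos.mpr (Finset.card_pos.mpr ⟨D p, Finset.mem_image_of_mem D
      (mem_labelClass.mpr ⟨hp, rfl⟩)⟩)).trans_le (hK p hp)
  refine (classEntropy_le_add_sum_neg_log (g' := g') (W := fun _ => K⁻¹)
    (fun p hp => inv_pos.mpr (hKpos p hp)) fun p hp => ?_).trans_eq (by simp)
  have hKp := hKpos p hp
  calc ∑ q ∈ labelClass P g p, K⁻¹ / (labelClass P g' q).card
      = K⁻¹ * ∑ q ∈ labelClass P g p, ((labelClass P g' q).card : ℝ)⁻¹ := by
        simp only [div_eq_mul_inv, Finset.mul_sum]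
    _ ≤ K⁻¹ * K := by
        gcongr
        exact (sum_inv_card_labelClass_labelClass_le hD p).trans (hK p hp)
    _ = 1 := inv_mul_cancel₀ hKp.ne'

lemma card_image_floor_le (hf : ∀ p ∈ A, f p ∈ Ico (0 : ℝ) b) :
    (A.image fun p => ⌊f p⌋).card ≤ b := by
  have hsub : (A.image fun p => ⌊f p⌋) ⊆ Finset.Ico (0 : ℤ) b :=
    Finset.image_subset_iff.mpr fun p hp => Finset.mem_Ico.mpr
      ⟨Int.floor_nonneg.mpr (hf p hp).1, Int.floor_lt.mpr (by simpa using (hf p hp).2)⟩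
  simpa using Finset.card_le_card hsub

lemma card_image_floor_le_of_factorsOn {T : Finset ℤ} (hM : ∀ q ∈ A, M q ∈ T)
    (ha : FactorsOn A M a) (hfa : ∀ q ∈ A, |f q - a q| ≤ 1) :
    (A.image fun q => ⌊f q⌋).card ≤ 4 * T.card := by
  classical
  have hfiber : ∀ m, (({q ∈ A | M q = m} : Finset α).image fun q => ⌊f q⌋).card ≤ 4 := by
    intro m
    obtain h | ⟨q₀, hq₀⟩ := ({q ∈ A | M q = m} : Finset α).eq_empty_or_nonempty
    · simp [h]
    rw [Finset.mem_filter] at hq₀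
    have hcard := card_image_floor_le_of_forall_abs_sub_le (A := {q ∈ A | M q = m}) (f := f)
      (x := a q₀) zero_le_one fun q hq => by
        rw [Finset.mem_filter] at hq
        rw [← ha q hq.1 q₀ hq₀.1 (hq.2.trans hq₀.2.symm)]
        exact hfa q hq.1
    exact_mod_cast hcard.trans_eq (by norm_num : 2 * 1 + 2 = (4 : ℝ))
  have hsub : (A.image fun q => ⌊f q⌋)
      ⊆ T.biUnion fun m => ({q ∈ A | M q = m} : Finset α).image fun q => ⌊f q⌋ :=
    Finset.image_subset_iff.mpr fun q hq => Finset.mem_biUnion.mpr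
      ⟨M q, hM q hq, Finset.mem_image_of_mem _ (Finset.mem_filter.mpr ⟨hq, rfl⟩)⟩
  calc _ ≤ _ := Finset.card_le_card hsub
    _ ≤ T.card * 4 := Finset.card_biUnion_le_card_mul _ _ _ fun m _ => hfiber m
    _ = 4 * T.card := mul_comm _ _

/-- The point `p` shares its label and the integer part of `f` with a point of `P` at which `a`
approximates `f` up to an error of one. -/
def IsPredicted {α γ : Type*} (P : Finset α) (g : α → γ) (f a : α → ℝ) (p : α) : Prop :=
  ∃ q ∈ P, g q = g p ∧ ⌊f q⌋ = ⌊f p⌋ ∧ |f q - a q| ≤ 1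

open Classical in
lemma card_image_floor_filter_isPredicted_le
    (hM : ∀ p ∈ P, ∀ q ∈ P, g p = g q → |M p - M q| ≤ 1)
    (ha : FactorsOn P (fun p => (g p, M p)) a) {p₀ : α} (hp₀ : p₀ ∈ P) :
    (({p ∈ labelClass P g p₀ | IsPredicted P g f a p} : Finset α).image fun p => ⌊f p⌋).card
      ≤ 12 := by
  have hsub : (({p ∈ labelClass P g p₀ | IsPredicted P g f a p} : Finset α).image fun p => ⌊f p⌋)
      ⊆ ({q ∈ labelClass P g p₀ | |f q - a q| ≤ 1} : Finset α).image fun q => ⌊f q⌋ := by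
    refine Finset.image_subset_iff.mpr fun p hp => ?_
    obtain ⟨hp, q, hq, hqp, hfloor, hqa⟩ := Finset.mem_filter.mp hp
    exact Finset.mem_image.mpr ⟨q, Finset.mem_filter.mpr
      ⟨mem_labelClass.mpr ⟨hq, hqp.trans (mem_labelClass.mp hp).2⟩, hqa⟩, hfloor⟩
  calc _ ≤ _ := Finset.card_le_card hsub
    _ ≤ 4 * (Finset.Icc (M p₀ - 1) (M p₀ + 1)).card := by
        refine card_image_floor_le_of_factorsOn (M := M) (a := a) (fun q hq => ?_)
          (fun q hq q' hq' h => ?_) fun q hq => (Finset.mem_filter.mp hq).2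
        · obtain ⟨hq, hqg⟩ := mem_labelClass.mp (Finset.mem_filter.mp hq).1
          have := abs_le.mp (hM q hq p₀ hp₀ hqg)
          rw [Finset.mem_Icc]
          lia
        · obtain ⟨hq, hqg⟩ := mem_labelClass.mp (Finset.mem_filter.mp hq).1
          obtain ⟨hq', hqg'⟩ := mem_labelClass.mp (Finset.mem_filter.mp hq').1
          exact ha q hq q' hq' (Prod.ext (hqg.trans hqg'.symm) h)
    _ = 12 := by
        rw [Int.card_Icc]
        lia

open Classical in
/-- A density on each class of `g` which is concentrated on the predicted points. -/
def predictionWeight {α γ : Type*} (P : Finset α) (g : α → γ) (f a : α → ℝ) (b : ℕ) (p : α) : ℝ :=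
  (if IsPredicted P g f a p then 24⁻¹ else 0) + (2 * (b : ℝ))⁻¹

lemma inv_le_predictionWeight (p : α) : (2 * (b : ℝ))⁻¹ ≤ predictionWeight P g f a b p :=
  le_add_of_nonneg_left (by split_ifs <;> norm_num)

lemma inv_le_predictionWeight_of_abs_sub_le {p : α} (hp : p ∈ P) (h : |f p - a p| ≤ 1) :
    24⁻¹ ≤ predictionWeight P g f a b p := by
  rw [predictionWeight, if_pos ⟨p, hp, rfl, rfl, h⟩]
  exact le_add_of_nonneg_right (by positivity)

lemma sum_predictionWeight_div_card_le (hf : ∀ p ∈ P, f p ∈ Ico (0 : ℝ) b)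
    (hg' : FactorsOn P (fun p => (g p, ⌊f p⌋)) g')
    (hM : ∀ p ∈ P, ∀ q ∈ P, g p = g q → |M p - M q| ≤ 1)
    (ha : FactorsOn P (fun p => (g p, M p)) a) {p₀ : α} (hp₀ : p₀ ∈ P) :
    ∑ p ∈ labelClass P g p₀, predictionWeight P g f a b p / (labelClass P g' p).card ≤ 1 := by
  classical
  have hb : (0 : ℝ) < b := (hf p₀ hp₀).1.trans_lt (hf p₀ hp₀).2
  have hall : ∑ p ∈ labelClass P g p₀, ((labelClass P g' p).card : ℝ)⁻¹ ≤ b :=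
    (sum_inv_card_labelClass_labelClass_le hg' p₀).trans
      (Nat.cast_le.mpr (card_image_floor_le fun p hp => hf p (labelClass_subset hp)))
  have hpred : ∑ p ∈ labelClass P g p₀ with IsPredicted P g f a p,
      ((labelClass P g' p).card : ℝ)⁻¹ ≤ 12 :=
    (sum_inv_card_labelClass_le ((Finset.filter_subset _ _).trans labelClass_subset)
      fun p hp q hq => hg'.labelClass p₀ p (Finset.mem_of_mem_filter p hp) q
        (Finset.mem_of_mem_filter q hq)).trans
      (by exact_mod_cast card_image_floor_filter_isPredicted_le hM ha hp₀)
  simp only [predictionWeight, div_eq_mul_inv, add_mul, ite_mul, zero_mul, Finset.sum_add_distrib,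
    ← Finset.sum_filter, ← Finset.mul_sum]
  calc _ ≤ 24⁻¹ * 12 + (2 * (b : ℝ))⁻¹ * b := by gcongr
    _ = 1 := by field_simp; norm_num

lemma classEntropy_le_of_predicted (hf : ∀ p ∈ P, f p ∈ Ico (0 : ℝ) b)
    (hg' : FactorsOn P (fun p => (g p, ⌊f p⌋)) g')
    (hM : ∀ p ∈ P, ∀ q ∈ P, g p = g q → |M p - M q| ≤ 1)
    (ha : FactorsOn P (fun p => (g p, M p)) a) :
    classEntropy P g ≤ classEntropy P g' + (P.card * Real.log 24
      + ({p ∈ P | 1 < |f p - a p|} : Finset α).card * Real.log (2 * b)) := by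
  have hinv : ∀ p ∈ P, 0 < (2 * (b : ℝ))⁻¹ := fun p hp =>
    inv_pos.mpr (mul_pos two_pos ((hf p hp).1.trans_lt (hf p hp).2))
  have hlog : ∀ p ∈ P, -Real.log (predictionWeight P g f a b p)
      ≤ Real.log 24 + (if 1 < |f p - a p| then 1 else 0) * Real.log (2 * b) := by
    intro p hp
    split_ifs with h
    · have hle := Real.log_le_log (hinv p hp)
        (inv_le_predictionWeight (P := P) (g := g) (f := f) (a := a) p)
      rw [Real.log_inv] at hle
      linarith [Real.log_nonneg (by norm_num : (1 : ℝ) ≤ 24)]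
    · have hle := Real.log_le_log (by norm_num)
        (inv_le_predictionWeight_of_abs_sub_le (g := g) (b := b) hp (not_lt.mp h))
      rw [Real.log_inv] at hle
      linarith
  refine (classEntropy_le_add_sum_neg_log
    (fun p hp => (hinv p hp).trans_le (inv_le_predictionWeight p))
    fun p hp => sum_predictionWeight_div_card_le hf hg' hM ha hp).trans
    (add_le_add_right ((Finset.sum_le_sum hlog).trans_eq ?_) _)
  rw [Finset.sum_add_distrib, ← Finset.sum_mul, Finset.sum_const, nsmul_eq_mul, Finset.sum_boole]

end ClassEntropy

/-! ### Large sets with small projections have large conditional variance -/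

/-- `P` discretises, at scale `b ^ (-n)`, a subset of dimension `d` of a fixed box. -/
structure IsDiscretization (b n : ℕ) (d : ℝ) (P : Finset (ℝ × ℝ)) : Prop where
  mem_box : ∀ p ∈ P, p ∈ Icc (-1 : ℝ) 1 ×ˢ Ico (0 : ℝ) 1
  separated : (P : Set (ℝ × ℝ)).Pairwise fun p q => 1 ≤ 8 * (b : ℝ) ^ n * dist p q
  le_card : ((b : ℝ) ^ n) ^ d ≤ P.card

/-- Labels a point by an approximation `z` of its projection and by its horizontal strip of height
`b ^ (-i)`. -/
def stripLabel (b : ℕ) (z : ℝ × ℝ → ℝ) (i : ℕ) (p : ℝ × ℝ) : ℝ × ℤ := (z p, ⌊(b : ℝ) ^ i * p.2⌋)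

/-- The points whose next base-`b` digit is not predicted by the conditional expectation of
`scaleFract`. -/
def unpredicted (b n : ℕ) (P : Finset (ℝ × ℝ)) (e : ℝ) (l : ℕ) : Finset ((ℝ × ℝ) × ℕ × ℕ) :=
  {ω ∈ scaleSpace P n | 1 < |b * scaleFract b ω - b * classAvg (scaleSpace P n)
    (cellLabel (scaleLabel b) (scaleProj b n e l)) (scaleFract b) ω|}

/-- The number of points of `unpredicted b n P e l` with scale `b ^ (-i)` and shift `j / 2 ^ n`. -/
def unpredictedCount (b n : ℕ) (P : Finset (ℝ × ℝ)) (e : ℝ) (l i j : ℕ) : ℕ :=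
  ({p ∈ P | 1 < |b * scaleFract b (p, i, j) - b * classAvg (scaleSpace P n)
    (cellLabel (scaleLabel b) (scaleProj b n e l)) (scaleFract b) (p, i, j)|} : Finset _).card

/-- The lower bound for `condVar b n P e l` when `P` is a discretization of dimension `d` whose
projection in direction `e`, `|e| ≤ E`, is homogeneous of dimension `s`. -/
def entropyBound (b n : ℕ) (C s d E : ℝ) (l : ℕ) : ℝ :=
  ((d - s) * Real.log b - Real.log 24 - (Real.log (C * (1 + E) ^ s)
    + Real.log ((34 + 16 * E) * 18) + (l + 1) * Real.log (2 * b)) / n) / (b ^ 2 * Real.log (2 * b))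

section EntropyBound

variable {b n : ℕ} {P A : Finset (ℝ × ℝ)} {C s e E d K : ℝ} {z : ℝ × ℝ → ℝ} {i j l : ℕ} {p₀ : ℝ × ℝ}

lemma card_le_of_pairwise_one_le_mul_dist (hK : 0 < K)
    (hA : (A : Set (ℝ × ℝ)).Pairwise fun p q => 1 ≤ K * dist p q) {D D' : ℝ} (hD : 0 ≤ D)
    (hD' : 0 ≤ D') (h : ∀ p ∈ A, K * |p.1 - p₀.1| ≤ D) (h' : ∀ p ∈ A, K * |p.2 - p₀.2| ≤ D') :
    (A.card : ℝ) ≤ (2 * D + 2) * (2 * D' + 2) := by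
  classical
  have habs : ∀ x y : ℝ, |K * x - K * y| = K * |x - y| := fun x y => by
    rw [← mul_sub, abs_mul, abs_of_pos hK]
  have hinj : InjOn (fun p : ℝ × ℝ => (⌊K * p.1⌋, ⌊K * p.2⌋)) A := by
    intro p hp q hq hpq
    obtain ⟨h₁, h₂⟩ := Prod.mk.inj hpq
    by_contra hne
    have hsep : 1 ≤ K * dist p q := hA hp hq hne
    rw [Prod.dist_eq, mul_max_of_nonneg _ _ hK.le, Real.dist_eq, Real.dist_eq, ← habs, ← habs]
      at hsep
    exact hsep.not_gt (max_lt (Int.abs_sub_lt_one_of_floor_eq_floor h₁)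
      (Int.abs_sub_lt_one_of_floor_eq_floor h₂))
  have hsub : A.image (fun p : ℝ × ℝ => (⌊K * p.1⌋, ⌊K * p.2⌋))
      ⊆ (A.image fun p => ⌊K * p.1⌋) ×ˢ A.image fun p => ⌊K * p.2⌋ :=
    Finset.image_subset_iff.mpr fun p hp => Finset.mem_product.mpr
      ⟨Finset.mem_image_of_mem (fun p : ℝ × ℝ => ⌊K * p.1⌋) hp,
        Finset.mem_image_of_mem (fun p : ℝ × ℝ => ⌊K * p.2⌋) hp⟩
  calc (A.card : ℝ)
      ≤ (A.image fun p => ⌊K * p.1⌋).card * (A.image fun p => ⌊K * p.2⌋).card := by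
        rw [← Finset.card_image_of_injOn hinj]
        exact_mod_cast (Finset.card_le_card hsub).trans_eq (Finset.card_product _ _)
    _ ≤ (2 * D + 2) * (2 * D' + 2) := by
        gcongr
        · exact card_image_floor_le_of_forall_abs_sub_le hD fun p hp =>
            (habs _ p₀.1).trans_le (h p hp)
        · exact card_image_floor_le_of_forall_abs_sub_le hD' fun p hp =>
            (habs _ p₀.2).trans_le (h' p hp)

lemma mul_abs_sub_le_of_abs_add_mul_sub_le {p q : ℝ × ℝ} {t : ℝ} (hK : 0 < K) (he : |e| ≤ E)
    (hp : |p.1 + e * p.2 - t| ≤ K⁻¹) (hq : |q.1 + e * q.2 - t| ≤ K⁻¹) (h : K * |p.2 - q.2| ≤ 1) :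
    K * |p.1 - q.1| ≤ 2 + E := by
  calc K * |p.1 - q.1|
      = K * |(p.1 + e * p.2 - t) - (q.1 + e * q.2 - t) - e * (p.2 - q.2)| := by
        congr 2
        ring
    _ ≤ K * (K⁻¹ + K⁻¹ + |e| * |p.2 - q.2|) := by
        rw [← abs_mul]
        gcongr
        exact (abs_sub _ _).trans (add_le_add_left ((abs_sub _ _).trans (add_le_add hp hq)) _)
    _ = 2 + |e| * (K * |p.2 - q.2|) := by
        field_simp
        ring
    _ ≤ 2 + E := by
        gcongr
        exact (mul_le_of_le_one_right (abs_nonneg e) h).trans he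

lemma card_labelClass_stripLabel_le (hb : 0 < b) (he : |e| ≤ E)
    (hP : (P : Set (ℝ × ℝ)).Pairwise fun p q => 1 ≤ 8 * (b : ℝ) ^ n * dist p q)
    (hz : ∀ p ∈ P, |p.1 + e * p.2 - z p| ≤ ((b : ℝ) ^ n)⁻¹) (hp₀ : p₀ ∈ P) :
    ((labelClass P (stripLabel b z n) p₀).card : ℝ) ≤ (34 + 16 * E) * 18 := by
  have hE : 0 ≤ E := (abs_nonneg e).trans he
  have hQ : (0 : ℝ) < (b : ℝ) ^ n := by positivity
  have hsnd : ∀ p ∈ labelClass P (stripLabel b z n) p₀, (b : ℝ) ^ n * |p.2 - p₀.2| ≤ 1 := by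
    intro p hp
    obtain ⟨-, hstrip⟩ := Prod.mk.inj (mem_labelClass.mp hp).2
    have := Int.abs_sub_lt_one_of_floor_eq_floor hstrip
    rw [← mul_sub, abs_mul, abs_of_pos hQ] at this
    exact this.le
  have hfst : ∀ p ∈ labelClass P (stripLabel b z n) p₀, (b : ℝ) ^ n * |p.1 - p₀.1| ≤ 2 + E := by
    intro p hp
    obtain ⟨hpP, hlabel⟩ := mem_labelClass.mp hp
    have hzp := hz p hpP
    rw [(Prod.mk.inj hlabel).1] at hzp
    exact mul_abs_sub_le_of_abs_add_mul_sub_le hQ he hzp (hz p₀ hp₀) (hsnd p hp)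
  refine (card_le_of_pairwise_one_le_mul_dist (p₀ := p₀) (mul_pos (by norm_num) hQ)
    (hP.mono (Finset.coe_subset.mpr labelClass_subset)) (D := 8 * (2 + E)) (D' := 8 * 1)
    (by positivity) (by positivity) (fun p hp => ?_) fun p hp => ?_).trans_eq (by ring)
  · rw [mul_assoc]
    exact mul_le_mul_of_nonneg_left (hfst p hp) (by norm_num)
  · rw [mul_assoc]
    exact mul_le_mul_of_nonneg_left (hsnd p hp) (by norm_num)

lemma classEntropy_stripLabel_le (hb : 0 < b) (he : |e| ≤ E)
    (hP : (P : Set (ℝ × ℝ)).Pairwise fun p q => 1 ≤ 8 * (b : ℝ) ^ n * dist p q)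
    (hz : ∀ p ∈ P, |p.1 + e * p.2 - z p| ≤ ((b : ℝ) ^ n)⁻¹) :
    classEntropy P (stripLabel b z n) ≤ P.card * Real.log ((34 + 16 * E) * 18) :=
  (Finset.sum_le_card_nsmul _ _ _ fun _ hp => Real.log_le_log
    (Nat.cast_pos.mpr (labelClass_card_pos hp))
    (card_labelClass_stripLabel_le hb he hP hz hp)).trans_eq (nsmul_eq_mul _ _)

lemma card_mul_log_card_le_classEntropy_add {α γ : Type*} [DecidableEq γ] {P : Finset α} {g : α → γ}
    {K : ℝ} (hK : ((P.image g).card : ℝ) ≤ K) :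
    P.card * Real.log P.card ≤ classEntropy P g + P.card * Real.log K := by
  have hclass : ∀ p, labelClass P (fun _ => ()) p = P := fun p => by
    ext
    simp [mem_labelClass]
  have h := classEntropy_le_add_card_mul_log (P := P) (g := fun _ => ()) (g' := g) (D := g)
    (K := K) (fun _ _ _ _ h => (Prod.mk.inj h).2) fun p _ => (hclass p).symm ▸ hK
  simpa only [classEntropy, hclass, Finset.sum_const, nsmul_eq_mul] using h

lemma card_mul_log_card_le_classEntropy_stripLabel_zero (hP : ∀ p ∈ P, p.2 ∈ Ico (0 : ℝ) 1)
    (hK : ((P.image z).card : ℝ) ≤ K) :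
    P.card * Real.log P.card ≤ classEntropy P (stripLabel b z 0) + P.card * Real.log K := by
  have hinj : Function.Injective fun t : ℝ => (t, (0 : ℤ)) := fun _ _ h => (Prod.mk.inj h).1
  have himage : P.image (stripLabel b z 0) = (P.image z).image fun t => (t, (0 : ℤ)) := by
    rw [Finset.image_image]
    refine Finset.image_congr fun p hp => ?_
    simp [stripLabel, Int.floor_eq_zero_iff.mpr (hP p hp)]
  exact card_mul_log_card_le_classEntropy_add
    (by rwa [himage, Finset.card_image_of_injective _ hinj])

lemma floor_pow_succ_mul (b i : ℕ) (x : ℝ) :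
    ⌊(b : ℝ) ^ (i + 1) * x⌋ = b * ⌊(b : ℝ) ^ i * x⌋ + ⌊b * Int.fract ((b : ℝ) ^ i * x)⌋ := by
  have h : (b : ℝ) ^ (i + 1) * x
      = ((b * ⌊(b : ℝ) ^ i * x⌋ : ℤ) : ℝ) + b * Int.fract ((b : ℝ) ^ i * x) := by
    rw [Int.fract]
    push_cast
    ring
  rw [h, Int.floor_intCast_add]

lemma factorsOn_stripLabel_succ :
    FactorsOn P (fun p => (stripLabel b z i p, ⌊b * scaleFract b (p, i, j)⌋))
      (stripLabel b z (i + 1)) := by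
  intro p _ q _ h
  simp only [stripLabel, scaleFract, Prod.mk.injEq] at h
  simp only [stripLabel, floor_pow_succ_mul, h]

lemma natCast_mul_scaleFract_mem_Ico (hb : 0 < b) (ω : (ℝ × ℝ) × ℕ × ℕ) :
    b * scaleFract b ω ∈ Ico (0 : ℝ) b := by
  have hb' : (0 : ℝ) < b := Nat.cast_pos.mpr hb
  exact ⟨mul_nonneg hb'.le (Int.fract_nonneg _), mul_lt_of_lt_one_right hb' (Int.fract_lt_one _)⟩

lemma classEntropy_stripLabel_le_succ (hb : 0 < b) :
    classEntropy P (stripLabel b z i)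
      ≤ classEntropy P (stripLabel b z (i + 1)) + P.card * Real.log b :=
  classEntropy_le_add_card_mul_log (factorsOn_stripLabel_succ (j := 0)) fun _ _ =>
    Nat.cast_le.mpr (card_image_floor_le fun _ _ => natCast_mul_scaleFract_mem_Ico hb _)

lemma abs_floor_sub_floor_le_one {x y : ℝ} (h : |x - y| ≤ 1) : |⌊x⌋ - ⌊y⌋| ≤ 1 := by
  obtain ⟨h₁, h₂⟩ := abs_le.mp h
  have hxy : ⌊x⌋ ≤ ⌊y⌋ + 1 := by
    rw [← Int.floor_add_one]
    exact Int.floor_le_floor (by linarith)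
  have hyx : ⌊y⌋ ≤ ⌊x⌋ + 1 := by
    rw [← Int.floor_add_one]
    exact Int.floor_le_floor (by linarith)
  rw [abs_le]
  lia

lemma abs_scaleProj_sub_le_one (hb : 2 ≤ b) (hi : i + (l + 1) ≤ n) {p q : ℝ × ℝ} {t : ℝ}
    (hp : |p.1 + e * p.2 - t| ≤ ((b : ℝ) ^ n)⁻¹) (hq : |q.1 + e * q.2 - t| ≤ ((b : ℝ) ^ n)⁻¹)
    (hstrip : ⌊(b : ℝ) ^ i * p.2⌋ = ⌊(b : ℝ) ^ i * q.2⌋) :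
    |scaleProj b n e l (p, i, j) - scaleProj b n e l (q, i, j)| ≤ 1 := by
  have hb₂ : (2 : ℝ) ≤ b := by exact_mod_cast hb
  calc |scaleProj b n e l (p, i, j) - scaleProj b n e l (q, i, j)|
      = |2 ^ l * (b : ℝ) ^ i * ((p.1 + e * p.2 - t) - (q.1 + e * q.2 - t))| := by
        rw [scaleProj_mk, scaleProj_mk, hstrip]
        congr 1
        ring
    _ ≤ 2 ^ l * (b : ℝ) ^ i * (((b : ℝ) ^ n)⁻¹ + ((b : ℝ) ^ n)⁻¹) := by
        rw [abs_mul, abs_of_pos (by positivity)]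
        gcongr
        exact (abs_sub _ _).trans (add_le_add hp hq)
    _ = 2 ^ (l + 1) * (b : ℝ) ^ i / (b : ℝ) ^ n := by ring
    _ ≤ (b : ℝ) ^ (l + 1) * (b : ℝ) ^ i / (b : ℝ) ^ n := by gcongr
    _ = (b : ℝ) ^ (i + (l + 1)) / (b : ℝ) ^ n := by ring
    _ ≤ 1 := div_le_one_of_le₀ (pow_le_pow_right₀ (by linarith) hi) (by positivity)

lemma classEntropy_stripLabel_le_succ_of_predicted (hb : 2 ≤ b) (hi : i + (l + 1) ≤ n)
    (hz : ∀ p ∈ P, |p.1 + e * p.2 - z p| ≤ ((b : ℝ) ^ n)⁻¹) :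
    classEntropy P (stripLabel b z i) ≤ classEntropy P (stripLabel b z (i + 1))
      + (P.card * Real.log 24 + unpredictedCount b n P e l i j * Real.log (2 * b)) := by
  refine classEntropy_le_of_predicted (M := fun p => ⌊scaleProj b n e l (p, i, j)⌋)
    (fun p _ => natCast_mul_scaleFract_mem_Ico (by lia) (p, i, j)) factorsOn_stripLabel_succ
    (fun p hp q hq h => ?_) fun p _ q _ h => ?_
  · obtain ⟨hzpq, hstrip⟩ := Prod.mk.inj h
    exact abs_floor_sub_floor_le_one
      (abs_scaleProj_sub_le_one hb hi (hz p hp) (hzpq ▸ hz q hq) hstrip)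
  · simp only [stripLabel, Prod.mk.injEq] at h
    refine congrArg ((b : ℝ) * ·) (classAvg_congr ?_)
    simp only [cellLabel, scaleLabel, h]

/-- Telescoping the entropy of the strips over all scales. -/
lemma classEntropy_stripLabel_zero_le (hb : 2 ≤ b)
    (hz : ∀ p ∈ P, |p.1 + e * p.2 - z p| ≤ ((b : ℝ) ^ n)⁻¹) (j l : ℕ) :
    classEntropy P (stripLabel b z 0) ≤ classEntropy P (stripLabel b z n)
      + (n * (P.card * Real.log 24) + ((∑ i ∈ Finset.range n, unpredictedCount b n P e l i j : ℕ)
        + (l + 1) * P.card) * Real.log (2 * b)) := by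
  have hb₂ : (2 : ℝ) ≤ b := by exact_mod_cast hb
  have hlog : 0 ≤ Real.log (2 * b) := Real.log_nonneg (by linarith)
  have hstep : ∀ i ∈ Finset.range n, classEntropy P (stripLabel b z i)
      - classEntropy P (stripLabel b z (i + 1)) ≤ P.card * Real.log 24
        + (unpredictedCount b n P e l i j + if n < i + (l + 1) then (P.card : ℝ) else 0)
          * Real.log (2 * b) := by
    intro i _
    rw [sub_le_iff_le_add']
    split_ifs with hi
    · refine (classEntropy_stripLabel_le_succ (by lia)).trans (add_le_add_right ?_ _)
      calc P.card * Real.log b ≤ P.card * Real.log (2 * b) := by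
            gcongr
            linarith
        _ ≤ _ := by
            rw [add_mul, ← add_assoc]
            exact le_add_of_nonneg_left (by positivity)
    · rw [add_zero]
      exact classEntropy_stripLabel_le_succ_of_predicted hb (not_lt.mp hi) hz
  have htele := Finset.sum_le_sum hstep
  rw [Finset.sum_range_sub', Finset.sum_add_distrib, Finset.sum_const, ← Finset.sum_mul,
    Finset.sum_add_distrib, ← Finset.sum_filter, Finset.sum_const, Finset.card_range, nsmul_eq_mul,
    nsmul_eq_mul, sub_le_iff_le_add'] at htele
  refine htele.trans ?_
  push_cast
  gcongr
  exact_mod_cast card_filter_range_lt_add_le n (l + 1)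

lemma card_unpredicted (b n : ℕ) (P : Finset (ℝ × ℝ)) (e : ℝ) (l : ℕ) :
    (unpredicted b n P e l).card = ∑ j ∈ Finset.range (2 ^ n), ∑ i ∈ Finset.range n,
      unpredictedCount b n P e l i j := by
  rw [unpredicted]
  simp only [unpredictedCount]
  generalize classAvg _ _ _ = a
  simp only [scaleSpace, Finset.card_filter, Finset.sum_product_right]

lemma card_unpredicted_le : ((unpredicted b n P e l).card : ℝ)
    ≤ b ^ 2 * classVar (scaleSpace P n) (cellLabel (scaleLabel b) (scaleProj b n e l))
      (scaleFract b) := by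
  rw [classVar, Finset.mul_sum, Finset.card_eq_sum_ones, Nat.cast_sum]
  refine (Finset.sum_le_sum fun ω hω => ?_).trans
    (Finset.sum_le_sum_of_subset_of_nonneg (Finset.filter_subset _ _) fun _ _ _ => by positivity)
  rw [← mul_pow, mul_sub, Nat.cast_one, one_le_sq_iff_one_le_abs]
  exact (Finset.mem_filter.mp hω).2.le

namespace ProjHomogeneous

lemma pos (hP : ProjHomogeneous b n P C s e) (hne : P.Nonempty) : 0 < C := by
  obtain ⟨p, hp⟩ := hne
  have hpos : (0 : ℝ) < ((b : ℝ) ^ n)⁻¹ + 1 := by positivity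
  obtain ⟨S, hcover, hS⟩ := hP (p.1 + e * p.2) _ _ (le_add_of_nonneg_right zero_le_one) le_rfl
  obtain ⟨q, hq, -⟩ := hcover p hp (by simpa using hpos.le)
  rw [div_self hpos.ne', Real.one_rpow, mul_one] at hS
  exact (Nat.cast_pos.mpr (Finset.card_pos.mpr ⟨q, hq⟩)).trans_le hS

/-- `z` rounds the projection to a `b ^ (-n)`-net. -/
lemma exists_approx (hP : ProjHomogeneous b n P C s e) (hb : 0 < b) (he : |e| ≤ E)
    (hbox : ∀ p ∈ P, p ∈ Icc (-1 : ℝ) 1 ×ˢ Ico (0 : ℝ) 1) :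
    ∃ z : ℝ × ℝ → ℝ, (∀ p ∈ P, |p.1 + e * p.2 - z p| ≤ ((b : ℝ) ^ n)⁻¹) ∧
      ((P.image z).card : ℝ) ≤ C * ((1 + E) * b ^ n) ^ s := by
  have hb₁ : (1 : ℝ) ≤ b := by exact_mod_cast hb
  have hE : 0 ≤ E := (abs_nonneg e).trans he
  obtain ⟨S, hS, hcard⟩ := hP 0 (1 + E) ((b : ℝ) ^ n)⁻¹ le_rfl
    ((inv_le_one_of_one_le₀ (one_le_pow₀ hb₁)).trans (le_add_of_nonneg_right hE))
  rw [div_inv_eq_mul] at hcard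
  have hproj : ∀ p ∈ P, |p.1 + e * p.2 - 0| ≤ 1 + E := by
    intro p hp
    obtain ⟨h₁, h₂⟩ := hbox p hp
    rw [sub_zero]
    refine (abs_add_le _ _).trans (add_le_add (abs_le.mpr h₁) ?_)
    rw [abs_mul, abs_of_nonneg h₂.1]
    exact (mul_le_of_le_one_right (abs_nonneg e) h₂.2.le).trans he
  choose! z hzS hz using fun p hp => hS p hp (hproj p hp)
  exact ⟨z, hz, (Nat.cast_le.mpr (Finset.card_le_card (Finset.image_subset_iff.mpr hzS))).trans
    hcard⟩

lemma card_mul_le_sum_unpredictedCount (hP : ProjHomogeneous b n P C s e) (hb : 2 ≤ b)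
    (he : |e| ≤ E) (hD : IsDiscretization b n d P) (j l : ℕ) :
    P.card * (Real.log P.card - Real.log (C * ((1 + E) * b ^ n) ^ s)
      - Real.log ((34 + 16 * E) * 18) - n * Real.log 24 - (l + 1) * Real.log (2 * b))
      ≤ (∑ i ∈ Finset.range n, unpredictedCount b n P e l i j : ℕ) * Real.log (2 * b) := by
  obtain ⟨z, hz, hcard⟩ := hP.exists_approx (by lia) he hD.mem_box
  have hzero := card_mul_log_card_le_classEntropy_stripLabel_zero (b := b)
    (fun p hp => (hD.mem_box p hp).2) hcard
  have hlast := classEntropy_stripLabel_le (by lia) he hD.separated hz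
  have htele := classEntropy_stripLabel_zero_le hb hz j l
  linarith

lemma mul_entropyBound_le_log_sub (hP : ProjHomogeneous b n P C s e) (hb : 2 ≤ b) (hn : 0 < n)
    (hE : 0 ≤ E) (hD : IsDiscretization b n d P) :
    n * (b ^ 2 * Real.log (2 * b) * entropyBound b n C s d E l)
      ≤ Real.log P.card - Real.log (C * ((1 + E) * b ^ n) ^ s)
      - Real.log ((34 + 16 * E) * 18) - n * Real.log 24 - (l + 1) * Real.log (2 * b) := by
  have hb₂ : (2 : ℝ) ≤ b := by exact_mod_cast hb
  have hQ : (0 : ℝ) < (b : ℝ) ^ n := by positivity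
  have hlog : 0 < Real.log (2 * b) := Real.log_pos (by linarith)
  have hcard : n * (d * Real.log b) ≤ Real.log P.card := by
    have := Real.log_le_log (by positivity) hD.le_card
    rw [Real.log_rpow hQ, Real.log_pow] at this
    linarith
  have hC : 0 < C := hP.pos (Finset.card_pos.mp (Nat.cast_pos.mp
    ((by positivity : (0 : ℝ) < ((b : ℝ) ^ n) ^ d).trans_le hD.le_card)))
  have hcover : Real.log (C * ((1 + E) * b ^ n) ^ s)
      = Real.log (C * (1 + E) ^ s) + n * (s * Real.log b) := by
    rw [Real.mul_rpow (by positivity) hQ.le, ← mul_assoc, Real.log_mul (by positivity)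
      (by positivity), Real.log_rpow hQ, Real.log_pow]
    ring
  have hbound : n * (b ^ 2 * Real.log (2 * b) * entropyBound b n C s d E l)
      = n * ((d - s) * Real.log b) - n * Real.log 24 - (Real.log (C * (1 + E) ^ s)
        + Real.log ((34 + 16 * E) * 18) + (l + 1) * Real.log (2 * b)) := by
    rw [entropyBound, mul_div_cancel₀ _ (by positivity)]
    field_simp
  rw [hcover, hbound]
  linarith

lemma entropyBound_le_condVar (hP : ProjHomogeneous b n P C s e) (hb : 2 ≤ b) (hn : 0 < n)
    (he : |e| ≤ E) (hD : IsDiscretization b n d P) (l : ℕ) :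
    entropyBound b n C s d E l ≤ condVar b n P e l := by
  have hb₂ : (2 : ℝ) ≤ b := by exact_mod_cast hb
  have hlog : 0 < Real.log (2 * b) := Real.log_pos (by linarith)
  have hPpos : (0 : ℝ) < P.card := lt_of_lt_of_le (by positivity) hD.le_card
  have hcard : ((scaleSpace P n).card : ℝ) = P.card * (n * 2 ^ n) := by
    rw [card_scaleSpace]
    push_cast
    rfl
  set T : ℝ := n * (b ^ 2 * Real.log (2 * b) * entropyBound b n C s d E l) with hT
  have hfiber : ∀ j ∈ Finset.range (2 ^ n), P.card * T
      ≤ (∑ i ∈ Finset.range n, unpredictedCount b n P e l i j : ℕ) * Real.log (2 * b) :=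
    fun j _ => (mul_le_mul_of_nonneg_left (hP.mul_entropyBound_le_log_sub hb hn
      ((abs_nonneg e).trans he) hD) hPpos.le).trans
      (hP.card_mul_le_sum_unpredictedCount hb he hD j l)
  have hsum : 2 ^ n * (P.card * T) ≤ (unpredicted b n P e l).card * Real.log (2 * b) := by
    have := Finset.sum_le_sum hfiber
    rw [Finset.sum_const, ← Finset.sum_mul, ← Nat.cast_sum, ← card_unpredicted, Finset.card_range,
      nsmul_eq_mul] at this
    exact_mod_cast this
  rw [condVar, le_div_iff₀ (by rw [hcard]; positivity)]
  refine le_of_mul_le_mul_left ?_ (by positivity : 0 < b ^ 2 * Real.log (2 * b))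
  calc b ^ 2 * Real.log (2 * b) * (entropyBound b n C s d E l * (scaleSpace P n).card)
      = 2 ^ n * (P.card * T) := by
        rw [hcard, hT]
        ring
    _ ≤ (unpredicted b n P e l).card * Real.log (2 * b) := hsum
    _ ≤ b ^ 2 * _ * Real.log (2 * b) := by
        gcongr
        exact card_unpredicted_le
    _ = _ := by ring

end ProjHomogeneous

end EntropyBound

/-! ### Directions with homogeneous projections are countable -/

lemma floor_div_ne_of_lt_sub {x y η : ℝ} (hη : 0 < η) (h : y < x - η) : ⌊y / η⌋ ≠ ⌊x / η⌋ := by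
  have hlt : y / η < x / η - 1 := by
    rw [div_lt_iff₀ hη, sub_mul, div_mul_cancel₀ _ hη.ne', one_mul]
    exact h
  intro heq
  linarith [(abs_lt.mp (Int.abs_sub_lt_one_of_floor_eq_floor heq)).1]

lemma countable_range_of_locally_drop {ι : Type*} {e W : ι → ℝ} {η : ℝ} (hη : 0 < η)
    (h : ∀ x, ∃ δ > 0, ∀ x', e x' ≠ e x → |e x' - e x| < δ → W x' < W x - η) :
    (range e).Countable := by
  have hlevel : ∀ k : ℤ, (e '' {x | ⌊W x / η⌋ = k}).Countable := by
    intro k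
    rw [← countable_coe_iff]
    have : DiscreteTopology (e '' {x | ⌊W x / η⌋ = k}) := by
      rw [discreteTopology_iff_isOpen_singleton]
      rintro ⟨_, x, hx, rfl⟩
      obtain ⟨δ, hδ, hdrop⟩ := h x
      refine Metric.isOpen_singleton_iff.mpr ⟨δ, hδ, ?_⟩
      rintro ⟨_, x', hx', rfl⟩ hdist
      by_contra hne
      exact floor_div_ne_of_lt_sub hη (hdrop x' (fun heq => hne (Subtype.ext heq)) hdist)
        (Eq.trans hx' (Eq.symm hx))
    exact TopologicalSpace.separableSpace_iff_countable.mp inferInstance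
  refine (countable_iUnion hlevel).mono ?_
  rintro _ ⟨x, rfl⟩
  exact mem_iUnion.mpr ⟨_, x, rfl, rfl⟩

lemma exists_two_pow_mul_mem_Ioc {D t : ℝ} {l : ℕ} (hD : 0 < D) (h : 2 ^ l * D ≤ t) :
    ∃ L ≥ l, 2 ^ L * D ∈ Ioc (t / 2) t := by
  obtain ⟨j, hle, hlt⟩ := exists_nat_pow_near ((one_le_div (by positivity)).mpr h) one_lt_two
  rw [le_div_iff₀ (by positivity)] at hle
  rw [div_lt_iff₀ (by positivity), pow_succ] at hlt
  refine ⟨l + j, Nat.le_add_right l j, ?_, ?_⟩ <;> rw [pow_add] <;> linarith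

/-- The shear inequality `hkey`, applied at the resolution `2 ^ (-L)` comparable to the distance `D`
between two directions, contradicts the lower bound for `V` unless `V'` ends up below `V`. -/
lemma iInf_lt_iInf_sub_of_shear {V V' : ℕ → ℝ} {c c₀ D κ : ℝ} {l v w : ℕ} (hV : Antitone V)
    (hV' : Antitone V') (hc : ∀ l, c ≤ V l) (hc' : ∀ l, c ≤ V' l) (hD : 0 < D)
    (hlip : V' l ≤ V l + 6 * (2 ^ l * D))
    (hkey : ∀ L, 2 ^ L * D < 1 / 2 ^ w →
      2 ^ L * D * (V L - κ) ≤ √(V L - V (L + v)) + √(V' L - V' (L + v)) + 2 / 2 ^ v)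
    (hcpos : 0 < c) (hκ : κ ≤ c / 2) (hc₀ : c₀ = 1 / 2 ^ w / 2 / 2 * (c / 2))
    (hv : 2 / 2 ^ v ≤ c₀ / 3)
    (hl : V l < (⨅ l, V l) + (c₀ / 6) ^ 2) (hD₁ : 6 * (2 ^ l * D) ≤ (c₀ / 6) ^ 2)
    (hD₂ : 2 ^ l * D ≤ 1 / 2 ^ w / 2) : ⨅ l, V' l < (⨅ l, V l) - (c₀ / 6) ^ 2 := by
  have hinf : ∀ l, ⨅ l, V l ≤ V l := ciInf_le ⟨c, forall_mem_range.mpr hc⟩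
  have hinf' : ∀ l, ⨅ l, V' l ≤ V' l := ciInf_le ⟨c, forall_mem_range.mpr hc'⟩
  have : 0 < c₀ := by
    rw [hc₀]
    positivity
  obtain ⟨L, hlL, hL, hL'⟩ := exists_two_pow_mul_mem_Ioc hD hD₂
  by_contra! hdrop
  have hsqrt : √(V L - V (L + v)) ≤ c₀ / 6 := by
    refine Real.sqrt_le_iff.mpr ⟨by positivity, ?_⟩
    linarith [hV hlL, hinf (L + v)]
  have hsqrt' : √(V' L - V' (L + v)) ≤ c₀ / 3 := by
    refine Real.sqrt_le_iff.mpr ⟨by positivity, ?_⟩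
    have : (c₀ / 3) ^ 2 = 4 * (c₀ / 6) ^ 2 := by ring
    linarith [hV' hlL, hinf' (L + v), sq_nonneg (c₀ / 6)]
  have hlower : c₀ ≤ 2 ^ L * D * (V L - κ) := by
    rw [hc₀]
    gcongr
    linarith [hc L]
  linarith [hkey L (hL'.trans_lt (half_lt_self (by positivity)))]

lemma countable_range_of_shear {ι : Type*} {e : ι → ℝ} {V : ι → ℕ → ℝ} {c : ℝ} {κ : ℕ → ℝ}
    (hanti : ∀ x, Antitone (V x)) (hlip : ∀ x x' l, V x' l ≤ V x l + 6 * (2 ^ l * |e x' - e x|))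
    (hκ : Tendsto κ atTop (𝓝 0))
    (hkey : ∀ x x' L w v, 1 ≤ w → 2 ^ L * |e x' - e x| < 1 / 2 ^ w →
      2 ^ L * |e x' - e x| * (V x L - κ w)
        ≤ √(V x L - V x (L + v)) + √(V x' L - V x' (L + v)) + 2 / 2 ^ v)
    (hc : 0 < c) (hV : ∀ x l, c ≤ V x l) : (range e).Countable := by
  obtain ⟨w, hw, hκw⟩ : ∃ w, 1 ≤ w ∧ κ w ≤ c / 2 :=
    ((eventually_ge_atTop 1).and (hκ.eventually_le_const (half_pos hc))).exists
  set c₀ : ℝ := 1 / 2 ^ w / 2 / 2 * (c / 2) with hc₀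
  have : 0 < c₀ := by positivity
  obtain ⟨v, hv⟩ : ∃ v : ℕ, 2 / 2 ^ v ≤ c₀ / 3 :=
    (((tendsto_pow_atTop_atTop_of_one_lt one_lt_two).const_div_atTop 2).eventually_le_const
      (by positivity)).exists
  have hη : 0 < (c₀ / 6) ^ 2 := by positivity
  refine countable_range_of_locally_drop (W := fun x => ⨅ l, V x l) hη fun x => ?_
  obtain ⟨l, hl⟩ := exists_lt_of_ciInf_lt (lt_add_of_pos_right (⨅ l, V x l) hη)
  refine ⟨min ((c₀ / 6) ^ 2 / (6 * 2 ^ l)) (1 / 2 ^ w / 2 / 2 ^ l), by positivity,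
    fun x' hne hD => ?_⟩
  rw [lt_min_iff, lt_div_iff₀' (by positivity), lt_div_iff₀' (by positivity), mul_assoc] at hD
  exact iInf_lt_iInf_sub_of_shear (hanti x) (hanti x') (hV x) (hV x')
    (abs_pos.mpr (sub_ne_zero.mpr hne)) (hlip x x' l) (fun L => hkey x x' L w v hw) hc hκw hc₀ hv
    hl hD.1.le hD.2.le

lemma tendsto_mul_rpow_mul_div_two_pow {C s : ℝ} (hs : s < 1) :
    Tendsto (fun w : ℕ => C * (2 * 2 ^ w) ^ s * (3 * (2 * (3 / 2 ^ w)))) atTop (𝓝 0) := by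
  have hgeom : (fun w : ℕ => C * (2 * 2 ^ w : ℝ) ^ s * (3 * (2 * (3 / 2 ^ w))))
      = fun w : ℕ => C * 2 ^ s * 18 * ((2 : ℝ) ^ (s - 1)) ^ w := by
    funext w
    rw [Real.mul_rpow zero_le_two (by positivity), ← Real.rpow_pow_comm zero_le_two,
      Real.rpow_sub_one two_ne_zero, div_pow]
    ring
  rw [hgeom]
  simpa only [mul_zero] using (tendsto_pow_atTop_nhds_zero_of_lt_one (by positivity)
    (Real.rpow_lt_one_of_one_lt_of_neg one_lt_two (sub_neg.mpr hs))).const_mul (C * 2 ^ s * 18)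

lemma tendsto_two_pow_div_two_pow (l : ℕ) :
    Tendsto (fun n : ℕ => (2 : ℝ) ^ l / 2 ^ n) atTop (𝓝 0) :=
  (tendsto_pow_atTop_atTop_of_one_lt one_lt_two).const_div_atTop _

lemma tendsto_edgeBound (C s : ℝ) (L w : ℕ) : Tendsto (fun n => edgeBound n C s L w) atTop
    (𝓝 (C * (2 * 2 ^ w) ^ s * (3 * (2 * (3 / 2 ^ w))))) := by
  have hshift := ((tendsto_two_pow_div_two_pow L).const_add (2 * (3 / (2 : ℝ) ^ w))).const_mul 3
  simpa only [edgeBound, add_zero] using (hshift.const_mul (C * (2 * 2 ^ w) ^ s)).add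
    (tendsto_const_div_atTop_nhds_zero_nat ((L + w : ℕ) : ℝ))

lemma tendsto_entropyBound (b : ℕ) (C s d E : ℝ) (l : ℕ) :
    Tendsto (fun n => entropyBound b n C s d E l) atTop
      (𝓝 (((d - s) * Real.log b - Real.log 24) / (b ^ 2 * Real.log (2 * b)))) := by
  simpa only [entropyBound, sub_zero] using ((tendsto_const_div_atTop_nhds_zero_nat
    (Real.log (C * (1 + E) ^ s) + Real.log ((34 + 16 * E) * 18) + (l + 1) * Real.log (2 * b))
    ).const_sub ((d - s) * Real.log b - Real.log 24)).div_const (b ^ 2 * Real.log (2 * b))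

lemma exists_tendsto_condVar (U : Ultrafilter ℕ) (b : ℕ) (P : ℕ → Finset (ℝ × ℝ)) (e : ℕ → ℝ)
    (l : ℕ) : ∃ V, Tendsto (fun n => condVar b n (P n) (e n) l) U (𝓝 V) := by
  obtain ⟨V, -, hV⟩ := (isCompact_Icc (a := (0 : ℝ)) (b := 1)).ultrafilter_le_nhds
    (U.map fun n => condVar b n (P n) (e n) l)
    (le_principal_iff.mpr (mem_map.mpr (univ_mem' fun _ => ⟨condVar_nonneg, condVar_le_one⟩)))
  exact ⟨V, hV⟩

theorem countable_range_of_projHomogeneous {ι : Type*} {U : Ultrafilter ℕ}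
    (hU : (U : Filter ℕ) ≤ atTop) {b : ℕ} {P : ℕ → Finset (ℝ × ℝ)} {C s d : ℝ} (hb : 2 ≤ b)
    (hs : s < 1) (hgap : Real.log 24 < (d - s) * Real.log b)
    (hP : ∀ n, IsDiscretization b n d (P n)) {ε : ℕ → ι → ℝ} {e : ι → ℝ}
    (he : ∀ x, Tendsto (fun n => ε n x) U (𝓝 (e x)))
    (hhom : ∀ x, ∀ᶠ n in U, ProjHomogeneous b n (P n) C s (ε n x)) : (range e).Countable := by
  have hb₂ : (2 : ℝ) ≤ b := by exact_mod_cast hb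
  have hlog : 0 < Real.log (2 * b) := Real.log_pos (by linarith)
  choose V hV using fun x => exists_tendsto_condVar U b P (ε · x)
  have hdist : ∀ x x' (L : ℕ), Tendsto (fun n => 2 ^ L * |ε n x' - ε n x|) U
      (𝓝 (2 ^ L * |e x' - e x|)) := fun x x' L => ((he x').sub (he x)).abs.const_mul _
  refine countable_range_of_shear (V := V)
    (c := ((d - s) * Real.log b - Real.log 24) / (b ^ 2 * Real.log (2 * b)))
    (fun x l l' hl => le_of_tendsto_of_tendsto' (hV x l') (hV x l) fun _ => condVar_antitone hl)
    (fun x x' l => ?_) (tendsto_mul_rpow_mul_div_two_pow (C := C) hs)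
    (fun x x' L w v hw hlt => ?_) (div_pos (by linarith) (by positivity)) fun x l => ?_
  · refine (le_of_tendsto_of_tendsto' (hV x' l) ((hV x l).add ((((hdist x x' l).const_mul 2).add
      ((tendsto_two_pow_div_two_pow l).mono_left hU)).const_mul 3))
      fun _ => condVar_le_condVar_add _ _).trans_eq ?_
    ring
  · refine le_of_tendsto_of_tendsto ((hdist x x' L).mul ((hV x L).sub
      ((tendsto_edgeBound C s L w).mono_left hU))) ((((hV x L).sub (hV x (L + v))).sqrt.add
      ((hV x' L).sub (hV x' (L + v))).sqrt).add_const (2 / 2 ^ v)) ?_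
    filter_upwards [hhom x, (hdist x x' L).eventually_le_const hlt] with n hn hle
    exact hn.mul_condVar_sub_edgeBound_le hb hw v hle
  · refine le_of_tendsto_of_tendsto
      ((tendsto_entropyBound b C s d (|e x| + 1) l).mono_left hU) (hV x l) ?_
    filter_upwards [hhom x, hU (eventually_gt_atTop 0),
      (he x).abs.eventually_le_const (lt_add_one |e x|)] with n hn hn₀ hle
    exact hn.entropyBound_le_condVar hb hn₀ hle (hP n) l

/-! ### Covers by balls and the Assouad dimension -/

/-- `AssouadBound E C α`: the covering property with constant `C` and exponent `α` which enters the
definition of `assouadDim E`. -/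
def AssouadBound {X : Type*} [PseudoMetricSpace X] (E : Set X) (C α : ℝ) : Prop :=
  ∀ x ∈ E, ∀ r R : ℝ, 0 < r → r < R →
    ∃ 𝒰 : Finset (Set X), (E ∩ closedBall x R ⊆ ⋃ U ∈ 𝒰, U) ∧
      (∀ U ∈ 𝒰, ediam U ≤ ENNReal.ofReal r) ∧
      ((𝒰.card : ℝ) ≤ C * (R / r) ^ α)

/-- `HasBallCover E A r N`: the set `A` is covered by at most `N` closed balls of radius `r` with
centres in `E`. -/
def HasBallCover {X : Type*} [PseudoMetricSpace X] (E A : Set X) (r N : ℝ) : Prop :=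
  ∃ S : Finset X, (S : Set X) ⊆ E ∧ (S.card : ℝ) ≤ N ∧ A ⊆ ⋃ p ∈ S, closedBall p r

section Assouad

variable {X : Type*} [PseudoMetricSpace X] {E A A' : Set X} {C C' α β d r r' N N' M Q R R₀ y : ℝ}
  {z : X}

lemma AssouadBound.mono (h : AssouadBound E C α) (hC : C ≤ C') (hC' : 0 ≤ C') (hα : α ≤ β) :
    AssouadBound E C' β := by
  intro x hx r R hr hrR
  obtain ⟨𝒰, hcover, hdiam, hcard⟩ := h x hx r R hr hrR
  have hratio : 1 ≤ R / r := (one_le_div hr).mpr hrR.le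
  refine ⟨𝒰, hcover, hdiam, hcard.trans ?_⟩
  gcongr

namespace HasBallCover

lemma singleton (hz : z ∈ E) : HasBallCover E (closedBall z r) r 1 :=
  ⟨{z}, by simpa using hz, by simp, by simp⟩

lemma mono (h : HasBallCover E A r N) (hA : A' ⊆ A) (hr : r ≤ r') (hN : N ≤ N') :
    HasBallCover E A' r' N' := by
  obtain ⟨S, hSE, hcard, hcover⟩ := h
  exact ⟨S, hSE, hcard.trans hN,
    (hA.trans hcover).trans (iUnion₂_mono fun p _ => closedBall_subset_closedBall hr)⟩

lemma trans (h : HasBallCover E A r M) (hAE : A ⊆ E) (hN : 0 ≤ N)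
    (h' : ∀ p ∈ E, HasBallCover E (E ∩ closedBall p r) r' N) : HasBallCover E A r' (M * N) := by
  classical
  obtain ⟨S, hSE, hcard, hcover⟩ := h
  choose! T hTE hTcard hTcover using h'
  refine ⟨S.biUnion T, ?_, ?_, fun y hy => ?_⟩
  · simpa only [Finset.coe_biUnion, iUnion_subset_iff] using fun p hp => hTE p (hSE hp)
  · calc ((S.biUnion T).card : ℝ) ≤ ∑ p ∈ S, ((T p).card : ℝ) := by
          exact_mod_cast Finset.card_biUnion_le
      _ ≤ S.card * N := by
          rw [← nsmul_eq_mul]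
          exact Finset.sum_le_card_nsmul _ _ _ fun p hp => hTcard p (hSE hp)
      _ ≤ M * N := by gcongr
  · obtain ⟨p, hp, hyp⟩ := mem_iUnion₂.mp (hcover hy)
    obtain ⟨q, hq, hyq⟩ := mem_iUnion₂.mp (hTcover p (hSE hp) ⟨hAE hy, hyp⟩)
    exact mem_iUnion₂.mpr ⟨q, Finset.mem_biUnion.mpr ⟨p, hp, hq⟩, hyq⟩

lemma iterate (h : ∀ z ∈ E, ∀ R, 0 < R → R ≤ R₀ → HasBallCover E (E ∩ closedBall z R) (R / Q) N)
    (hN : 0 ≤ N) (hQ : 1 ≤ Q) (hR : 0 < R) (hR₀ : R ≤ R₀) (hz : z ∈ E) (j : ℕ) :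
    HasBallCover E (E ∩ closedBall z R) (R / Q ^ j) (N ^ j) := by
  induction j with
  | zero =>
    simpa only [pow_zero, div_one] using (singleton hz).mono inter_subset_right le_rfl le_rfl
  | succ j ih =>
    rw [pow_succ, pow_succ, ← div_div]
    exact ih.trans inter_subset_left hN fun p hp =>
      h p hp _ (by positivity) ((div_le_self hR.le (one_le_pow₀ hQ)).trans hR₀)

lemma of_le_mul (h : ∀ z ∈ E, ∀ R, 0 < R → R ≤ R₀ →
      HasBallCover E (E ∩ closedBall z R) (R / Q) (Q ^ d))
    (hd : 0 ≤ d) (hQ : 1 < Q) (hR : 0 < R) (hR₀ : R ≤ R₀) (hy : 1 ≤ y) (hRy : R ≤ y * r)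
    (hz : z ∈ E) : HasBallCover E (E ∩ closedBall z R) r ((Q * y) ^ d) := by
  have hQ₀ : 0 < Q := one_pos.trans hQ
  obtain ⟨j, hle, hlt⟩ := exists_nat_pow_near hy hQ
  have hr : 0 < r := pos_of_mul_pos_right (hR.trans_le hRy) (zero_le_one.trans hy)
  refine (iterate h (by positivity) hQ.le hR hR₀ hz (j + 1)).mono le_rfl ?_ ?_
  · rw [div_le_iff₀' (by positivity)]
    exact hRy.trans (by gcongr)
  · rw [Real.rpow_pow_comm hQ₀.le, pow_succ']
    gcongr

end HasBallCover

lemma exists_hasBallCover_of_totallyBounded (hE : TotallyBounded E) (hr : 0 < r) :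
    ∃ N, 0 ≤ N ∧ HasBallCover E E r N := by
  obtain ⟨T, hTE, hT, hcover⟩ := hE.exists_subset (Metric.dist_mem_uniformity hr)
  refine ⟨hT.toFinset.card, Nat.cast_nonneg _, hT.toFinset, by simpa using hTE, le_rfl,
    fun y hy => ?_⟩
  obtain ⟨p, hp, hyp⟩ := mem_iUnion₂.mp (hcover hy)
  exact mem_iUnion₂.mpr ⟨p, hT.mem_toFinset.mpr hp, mem_closedBall.mpr (le_of_lt hyp)⟩

lemma ediam_closedBall_half_le {p : X} : ediam (closedBall p (r / 2)) ≤ ENNReal.ofReal r := by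
  refine ediam_le fun x hx y hy => ?_
  rw [edist_dist]
  refine ENNReal.ofReal_le_ofReal ?_
  linarith [dist_triangle_right x y p, mem_closedBall.mp hx, mem_closedBall.mp hy]

lemma AssouadBound.of_hasBallCover (h : ∀ x ∈ E, ∀ r R : ℝ, 0 < r → r < R →
      HasBallCover E (E ∩ closedBall x R) (r / 2) (C * (R / r) ^ α)) : AssouadBound E C α := by
  classical
  intro x hx r R hr hrR
  obtain ⟨S, -, hcard, hcover⟩ := h x hx r R hr hrR
  refine ⟨S.image (closedBall · (r / 2)), by simpa using hcover, ?_, le_trans ?_ hcard⟩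
  · rw [Finset.forall_mem_image]
    exact fun p _ => ediam_closedBall_half_le
  · exact_mod_cast Finset.card_image_le

lemma hasBallCover_or_exists_separated (hr : 0 ≤ r) (hN : 0 ≤ N) :
    HasBallCover A A r N ∨ ∃ S : Finset X, (S : Set X) ⊆ A ∧ N ≤ S.card ∧
      (S : Set X).Pairwise fun p q => r < dist p q := by
  lift r to ℝ≥0 using hr
  rcases le_or_gt (packingNumber r A) ⌊N⌋₊ with hle | hlt
  · have hcov : coveringNumber r A ≤ ⌊N⌋₊ := (coveringNumber_le_packingNumber r A).trans hle
    obtain ⟨S, hSA, hS, hcover, hcard⟩ :=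
      exists_set_encard_eq_coveringNumber (hcov.trans_lt (ENat.natCast_lt_top _)).ne
    rw [← hcard, hS.encard_eq_coe_toFinset_card, Nat.cast_le] at hcov
    refine Or.inl ⟨hS.toFinset, by simpa using hSA, (Nat.le_floor_iff hN).mp hcov, ?_⟩
    simpa using isCover_iff_subset_iUnion_closedBall.mp hcover
  · obtain ⟨T, hT⟩ := lt_iSup_iff.mp hlt
    obtain ⟨hTA, hT⟩ := lt_iSup_iff.mp hT
    obtain ⟨hsep, hT⟩ := lt_iSup_iff.mp hT
    obtain ⟨S, hST, hS⟩ := exists_subset_encard_eq (Order.add_one_le_of_lt hT)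
    have hfin : S.Finite := finite_of_encard_eq_coe (k := ⌊N⌋₊ + 1) (by exact_mod_cast hS)
    rw [hfin.encard_eq_coe_toFinset_card] at hS
    have hcard : hfin.toFinset.card = ⌊N⌋₊ + 1 := by exact_mod_cast hS
    refine Or.inr ⟨hfin.toFinset, by simpa using hST.trans hTA, ?_, ?_⟩
    · rw [hcard]
      exact_mod_cast (Nat.lt_floor_add_one N).le
    · rw [hfin.coe_toFinset]
      intro p hp q hq hne
      have hlt : (r : ℝ≥0∞) < edist p q := hsep (hST hp) (hST hq) hne
      rwa [edist_nndist, ENNReal.coe_lt_coe, ← NNReal.coe_lt_coe, coe_nndist] at hlt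

theorem exists_separated_of_not_assouadBound (hE : TotallyBounded E) (hd : 0 ≤ d)
    (h : ∀ C, 0 < C → ¬ AssouadBound E C d) (hQ : 1 < Q) (hR₀ : 0 < R₀) :
    ∃ z ∈ E, ∃ R, 0 < R ∧ R ≤ R₀ ∧ ∃ S : Finset X, (S : Set X) ⊆ E ∩ closedBall z R ∧
      Q ^ d ≤ S.card ∧ (S : Set X).Pairwise fun p q => R / Q < dist p q := by
  by_contra! hcon
  have : 0 < Q := one_pos.trans hQ
  have hcover : ∀ z ∈ E, ∀ R, 0 < R → R ≤ R₀ →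
      HasBallCover E (E ∩ closedBall z R) (R / Q) (Q ^ d) := by
    intro z hz R hR hRR₀
    rcases hasBallCover_or_exists_separated (A := E ∩ closedBall z R) (r := R / Q) (N := Q ^ d)
      (by positivity) (by positivity) with ⟨S, hS, hcard, hcover⟩ | ⟨S, hS, hcard, hsep⟩
    · exact ⟨S, hS.trans inter_subset_left, hcard, hcover⟩
    · exact absurd hsep (hcon z hz R hR hRR₀ S hS hcard)
  obtain ⟨N, hN, hnet⟩ := exists_hasBallCover_of_totallyBounded hE hR₀
  refine h ((N + 1) * (2 * Q) ^ d) (by positivity) (.of_hasBallCover fun x hx r R hr hrR => ?_)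
  have hR : 0 < R := hr.trans hrR
  have hy : 1 ≤ 2 * R / r := (one_le_div hr).mpr (by linarith)
  have hRy : R ≤ 2 * R / r * (r / 2) := by field_simp; rfl
  have hpow : (Q * (2 * R / r)) ^ d = (2 * Q) ^ d * (R / r) ^ d := by
    rw [← Real.mul_rpow (by positivity) (by positivity)]
    ring_nf
  rw [mul_assoc, ← hpow]
  have hpos : 0 ≤ (Q * (2 * R / r)) ^ d := by positivity
  rcases le_total R R₀ with hRR₀ | hR₀R
  · exact (HasBallCover.of_le_mul hcover hd hQ hR hRR₀ hy hRy hx).mono le_rfl le_rfl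
      (by nlinarith)
  · exact (hnet.trans le_rfl hpos fun p hp => HasBallCover.of_le_mul hcover hd hQ hR₀ le_rfl hy
      (hR₀R.trans hRy) hp).mono inter_subset_left le_rfl (by nlinarith)

lemma not_assouadBound_of_lt_assouadDim (hd : 0 ≤ d) (h : d < assouadDim E) (hC : 0 < C) :
    ¬ AssouadBound E C d :=
  fun hE => notMem_of_lt_csInf h ⟨0, fun _ hα => hα.1⟩ ⟨hd, C, hC, hE⟩

end Assouad

section NormedSpace

variable {V : Type*} [NormedAddCommGroup V] [NormedSpace ℝ V] [FiniteDimensional ℝ V] {E : Set V}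
  {R : ℝ} {z : V}

lemma card_le_of_pairwise_half_lt_dist {S : Finset V} (hR : 0 < R)
    (hS : (S : Set V) ⊆ closedBall z R) (hsep : (S : Set V).Pairwise fun p q => R / 2 < dist p q) :
    S.card ≤ 5 ^ Module.finrank ℝ V := by
  classical
  set f : V → V := fun p => (2 / R) • (p - z) with hf
  have hscale : ∀ v : V, ‖(2 / R) • v‖ = 2 * ‖v‖ / R := fun v => by
    rw [norm_smul, Real.norm_of_nonneg (by positivity), div_mul_eq_mul_div]
  have hinj : Function.Injective f :=
    (smul_right_injective V (by positivity : (2 / R : ℝ) ≠ 0)).comp (sub_left_injective)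
  rw [← Finset.card_image_of_injective S hinj]
  refine Besicovitch.card_le_of_separated _ ?_ ?_
  · rw [Finset.forall_mem_image]
    intro p hp
    rw [hscale, div_le_iff₀ hR, ← dist_eq_norm]
    linarith [mem_closedBall.mp (hS hp)]
  · simp only [Finset.mem_image, forall_exists_index, and_imp]
    rintro _ p hp rfl _ q hq rfl hne
    rw [hf, ← smul_sub, sub_sub_sub_cancel_right, hscale, le_div_iff₀ hR, ← dist_eq_norm]
    linarith [hsep hp hq (ne_of_apply_ne f hne)]

lemma exists_assouadBound_of_isBounded (hE : Bornology.IsBounded E) :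
    ∃ α C, 0 ≤ α ∧ 0 < C ∧ AssouadBound E C α := by
  have := FiniteDimensional.proper_real V
  by_contra! hcon
  set k := Module.finrank ℝ V
  obtain ⟨z, -, R, hR, -, S, hS, hcard, hsep⟩ := exists_separated_of_not_assouadBound
    (d := (3 * k + 1 : ℕ)) (hE.isCompact_closure.totallyBounded.subset subset_closure)
    (Nat.cast_nonneg _) (fun C => hcon _ C (Nat.cast_nonneg _)) one_lt_two one_pos
  have hle := card_le_of_pairwise_half_lt_dist hR (hS.trans inter_subset_right) hsep
  rw [Real.rpow_natCast] at hcard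
  have hpow : 2 ^ (3 * k + 1) ≤ 5 ^ k := by exact_mod_cast hcard.trans (Nat.cast_le.mpr hle)
  rw [pow_succ, pow_mul] at hpow
  have : 5 ^ k ≤ (2 ^ 3) ^ k := Nat.pow_le_pow_left (by norm_num) k
  have : 0 < 5 ^ k := by positivity
  omega

lemma exists_assouadBound_of_assouadDim_lt {t : ℝ} (hE : Bornology.IsBounded E)
    (h : assouadDim E < t) : ∃ s : ℚ, 0 ≤ (s : ℝ) ∧ s < t ∧ ∃ C : ℕ, AssouadBound E C s := by
  obtain ⟨β, K, hβ, hK, hEβ⟩ := exists_assouadBound_of_isBounded hE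
  obtain ⟨α, ⟨hα, C, -, hEα⟩, hαt⟩ := exists_lt_of_csInf_lt (by exact ⟨β, hβ, K, hK, hEβ⟩) h
  obtain ⟨s, hαs, hst⟩ := exists_rat_btwn hαt
  exact ⟨s, hα.trans hαs.le, hst, ⌈C⌉₊,
    AssouadBound.mono hEα (Nat.le_ceil C) (Nat.cast_nonneg _) hαs.le⟩

end NormedSpace

/-! ### Radial projections in the plane are nearly linear -/

/-- The determinant of two planar vectors; up to the product of the lengths it is the sine of the
angle between them. -/
def planeCross (u v : Euc 2) : ℝ := u 0 * v 1 - u 1 * v 0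

/-- The coordinates of a point of `closedBall z R`, rescaled to the middle of the unit square. -/
def rescale (z : Euc 2) (R : ℝ) (y : Euc 2) : ℝ × ℝ :=
  ((y 0 - z 0) / (4 * R) + 1 / 2, (y 1 - z 1) / (4 * R) + 1 / 2)

/-- The number `e` such that `p ↦ p.1 + e * p.2` is constant on lines parallel to `z - x`. Near `z`,
this linear map is close to the radial projection from `x`. -/
def projSlope (z x : Euc 2) : ℝ := -(z 0 - x 0) / (z 1 - x 1)

/-- The linear projection along the direction from `x` to `z`, in rescaled coordinates. -/
def slopeProj (z x : Euc 2) (R : ℝ) (y : Euc 2) : ℝ :=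
  (rescale z R y).1 + projSlope z x * (rescale z R y).2

/-- The ball `closedBall z R` is far from `x` compared with its radius, in a direction away from
the horizontal, so that `radialProj x` and `slopeProj z x R` are comparable there. -/
structure TransverseBall (x z : Euc 2) (R c M : ℝ) : Prop where
  radius_pos : 0 < R
  four_mul_radius_le : 4 * R ≤ c
  le_abs_sub : c ≤ |z 1 - x 1|
  norm_add_le : ‖z - x‖ + c ≤ M

/-- The factor by which the constant of an `AssouadBound` grows, up to the exponent, when passing
from `radialProj` to `slopeProj` on a `TransverseBall`. -/
def distortion (c M : ℝ) : ℝ := 8 * (8 * M + 1) * M ^ 2 / c ^ 3 + 1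

section InnerProductSpace

variable {V : Type*} [NormedAddCommGroup V] [InnerProductSpace ℝ V] {u v w : V}

lemma sq_norm_mul_norm_mul_norm_inv_smul_sub (hu : u ≠ 0) (hv : v ≠ 0) :
    (‖u‖ * ‖v‖ * ‖‖u‖⁻¹ • u - ‖v‖⁻¹ • v‖) ^ 2
      = 2 * (‖u‖ * ‖v‖) * (‖u‖ * ‖v‖ - inner ℝ u v) := by
  have hu' : ‖u‖ ≠ 0 := norm_ne_zero_iff.mpr hu
  have hv' : ‖v‖ ≠ 0 := norm_ne_zero_iff.mpr hv
  rw [mul_pow, norm_sub_sq_real, norm_smul, norm_smul, real_inner_smul_left,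
    real_inner_smul_right, norm_inv, norm_inv, norm_norm, norm_norm]
  field_simp
  ring

lemma inner_add_add_nonneg (hu : ‖u‖ ≤ ‖w‖ / 4) (hv : ‖v‖ ≤ ‖w‖ / 4) :
    0 ≤ inner ℝ (w + u) (w + v) := by
  rw [inner_add_left, inner_add_right, inner_add_right, real_inner_self_eq_norm_sq]
  have hwv : ‖w‖ * ‖v‖ ≤ ‖w‖ * (‖w‖ / 4) := by gcongr
  have huw : ‖u‖ * ‖w‖ ≤ ‖w‖ / 4 * ‖w‖ := by gcongr
  have huv : ‖u‖ * ‖v‖ ≤ ‖w‖ / 4 * (‖w‖ / 4) := by gcongr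
  nlinarith [(abs_le.mp (abs_real_inner_le_norm w v)).1, (abs_le.mp (abs_real_inner_le_norm u w)).1,
    (abs_le.mp (abs_real_inner_le_norm u v)).1]

end InnerProductSpace

lemma abs_apply_sub_le_dist {n : ℕ} (y z : Euc n) (i : Fin n) : |y i - z i| ≤ dist y z := by
  rw [dist_eq_norm]
  exact PiLp.norm_apply_le (y - z) i

lemma dist_radialProj {n : ℕ} {t y y' : Euc n} (hy : y ≠ t) (hy' : y' ≠ t) :
    dist (radialProj t y) (radialProj t y')
      = ‖‖y - t‖⁻¹ • (y - t) - ‖y' - t‖⁻¹ • (y' - t)‖ := by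
  rw [radialProj, radialProj, if_neg hy, if_neg hy', dist_add_right, dist_eq_norm]

section PlaneCross

variable {u v : Euc 2}

lemma inner_sq_add_planeCross_sq (u v : Euc 2) :
    inner ℝ u v ^ 2 + planeCross u v ^ 2 = (‖u‖ * ‖v‖) ^ 2 := by
  rw [mul_pow, EuclideanSpace.real_norm_sq_eq, EuclideanSpace.real_norm_sq_eq, planeCross,
    PiLp.inner_apply, Fin.sum_univ_two, Fin.sum_univ_two, Fin.sum_univ_two]
  simp only [RCLike.inner_apply, conj_trivial]
  ring

lemma abs_planeCross_le (u v : Euc 2) : |planeCross u v| ≤ ‖u‖ * ‖v‖ := by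
  refine abs_le_of_sq_le_sq ?_ (by positivity)
  linarith [inner_sq_add_planeCross_sq u v, sq_nonneg (inner ℝ u v)]

lemma norm_mul_norm_mul_norm_inv_smul_sub_le (hu : u ≠ 0) (hv : v ≠ 0) (h : 0 ≤ inner ℝ u v) :
    ‖u‖ * ‖v‖ * ‖‖u‖⁻¹ • u - ‖v‖⁻¹ • v‖ ≤ 2 * |planeCross u v| := by
  refine (sq_le_sq₀ (by positivity) (by positivity)).mp ?_
  rw [sq_norm_mul_norm_mul_norm_inv_smul_sub hu hv, mul_pow, sq_abs]
  nlinarith [inner_sq_add_planeCross_sq u v, real_inner_le_norm u v,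
    mul_nonneg h (sub_nonneg.mpr (real_inner_le_norm u v))]

lemma abs_planeCross_le_norm_mul_norm_mul_norm_inv_smul_sub (hu : u ≠ 0) (hv : v ≠ 0) :
    |planeCross u v| ≤ ‖u‖ * ‖v‖ * ‖‖u‖⁻¹ • u - ‖v‖⁻¹ • v‖ := by
  refine abs_le_of_sq_le_sq ?_ (by positivity)
  rw [sq_norm_mul_norm_mul_norm_inv_smul_sub hu hv]
  nlinarith [inner_sq_add_planeCross_sq u v, sq_nonneg (‖u‖ * ‖v‖ - inner ℝ u v)]

lemma planeCross_sub_eq {x z : Euc 2} {R : ℝ} (hR : R ≠ 0) (hz : z 1 ≠ x 1) (y y' : Euc 2) :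
    planeCross (y - y') (z - x)
      = 4 * R * (z 1 - x 1) * (slopeProj z x R y - slopeProj z x R y') := by
  have hz' : z 1 - x 1 ≠ 0 := sub_ne_zero.mpr hz
  simp only [planeCross, slopeProj, rescale, projSlope, PiLp.sub_apply]
  field_simp
  ring

lemma planeCross_sub_sub (x z y y' : Euc 2) :
    planeCross (y - x) (y' - x) = planeCross (y - y') (z - x) + planeCross (y - z) (y' - z) := by
  simp only [planeCross, PiLp.sub_apply]
  ring

end PlaneCross

namespace TransverseBall

variable {x z y y' : Euc 2} {R c M ρ : ℝ}

lemma pos (h : TransverseBall x z R c M) : 0 < c := by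
  linarith [h.radius_pos, h.four_mul_radius_le]

lemma le_norm (h : TransverseBall x z R c M) : c ≤ ‖z - x‖ :=
  h.le_abs_sub.trans (PiLp.norm_apply_le (z - x) 1)

lemma snd_ne (h : TransverseBall x z R c M) : z 1 ≠ x 1 :=
  sub_ne_zero.mp (abs_pos.mp (h.pos.trans_le h.le_abs_sub))

lemma bound_pos (h : TransverseBall x z R c M) : 0 < M := by
  linarith [h.pos, h.le_norm, h.norm_add_le]

lemma half_le_norm_sub (h : TransverseBall x z R c M) (hy : dist y z ≤ R) : c / 2 ≤ ‖y - x‖ := by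
  rw [dist_eq_norm'] at hy
  linarith [norm_sub_le_norm_sub_add_norm_sub z y x, h.le_norm, h.four_mul_radius_le, h.radius_pos]

lemma norm_sub_le (h : TransverseBall x z R c M) (hy : dist y z ≤ R) : ‖y - x‖ ≤ M := by
  rw [dist_eq_norm] at hy
  linarith [norm_sub_le_norm_sub_add_norm_sub y z x, h.norm_add_le, h.four_mul_radius_le,
    h.radius_pos]

lemma ne (h : TransverseBall x z R c M) (hy : dist y z ≤ R) : y ≠ x :=
  sub_ne_zero.mp (norm_pos_iff.mp ((half_pos h.pos).trans_le (h.half_le_norm_sub hy)))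

lemma inner_sub_nonneg (h : TransverseBall x z R c M) (hy : dist y z ≤ R) (hy' : dist y' z ≤ R) :
    0 ≤ inner ℝ (y - x) (y' - x) := by
  rw [dist_eq_norm] at hy hy'
  have hR : R ≤ ‖z - x‖ / 4 := by linarith [h.four_mul_radius_le, h.le_norm]
  simpa only [sub_add_sub_cancel'] using inner_add_add_nonneg (hy.trans hR) (hy'.trans hR)

lemma abs_planeCross_sub_sub_sub_le (h : TransverseBall x z R c M) (hy : dist y z ≤ R)
    (hy' : dist y' z ≤ R) :
    |planeCross (y - x) (y' - x) - planeCross (y - y') (z - x)| ≤ R * R := by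
  rw [dist_eq_norm] at hy hy'
  rw [planeCross_sub_sub x z, add_sub_cancel_left]
  exact (abs_planeCross_le _ _).trans (mul_le_mul hy hy' (norm_nonneg _) h.radius_pos.le)

lemma abs_planeCross_sub_eq (h : TransverseBall x z R c M) (y y' : Euc 2) :
    |planeCross (y - y') (z - x)|
      = 4 * R * |z 1 - x 1| * |slopeProj z x R y - slopeProj z x R y'| := by
  rw [planeCross_sub_eq h.radius_pos.ne' h.snd_ne, abs_mul, abs_mul,
    abs_of_pos (mul_pos four_pos h.radius_pos)]

lemma dist_radialProj_le (h : TransverseBall x z R c M) (hy : dist y z ≤ R) (hy' : dist y' z ≤ R)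
    (hρ : R ≤ ρ) (hdist : |slopeProj z x R y - slopeProj z x R y'| ≤ 2 * ρ) :
    dist (radialProj x y) (radialProj x y') ≤ 8 * (8 * M + 1) / c ^ 2 * (R * ρ) := by
  have hc := h.pos
  have hR := h.radius_pos
  have hM := h.bound_pos
  rw [dist_radialProj (h.ne hy) (h.ne hy')]
  set D := ‖‖y - x‖⁻¹ • (y - x) - ‖y' - x‖⁻¹ • (y' - x)‖
  have hcross : |planeCross (y - x) (y' - x)| ≤ (8 * M + 1) * (R * ρ) := by
    have hlin : |planeCross (y - y') (z - x)| ≤ 4 * R * M * (2 * ρ) := by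
      rw [h.abs_planeCross_sub_eq]
      have : |z 1 - x 1| ≤ M := by
        linarith [h.norm_add_le, abs_apply_sub_le_dist z x 1, dist_eq_norm z x]
      gcongr
    have hquad : R * R ≤ R * ρ := by gcongr
    linarith [abs_sub_abs_le_abs_sub (planeCross (y - x) (y' - x)) (planeCross (y - y') (z - x)),
      h.abs_planeCross_sub_sub_sub_le hy hy']
  have hD : c / 2 * (c / 2) * D ≤ 2 * ((8 * M + 1) * (R * ρ)) :=
    calc c / 2 * (c / 2) * D ≤ ‖y - x‖ * ‖y' - x‖ * D := by
          gcongr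
          exacts [h.half_le_norm_sub hy, h.half_le_norm_sub hy']
      _ ≤ 2 * |planeCross (y - x) (y' - x)| := norm_mul_norm_mul_norm_inv_smul_sub_le
          (sub_ne_zero.mpr (h.ne hy)) (sub_ne_zero.mpr (h.ne hy')) (h.inner_sub_nonneg hy hy')
      _ ≤ 2 * ((8 * M + 1) * (R * ρ)) := by gcongr
  rw [div_mul_eq_mul_div, le_div_iff₀ (by positivity)]
  linarith

lemma dist_radialProj_le_distortion_mul (h : TransverseBall x z R c M) (hy : dist y z ≤ R)
    (hy' : dist y' z ≤ R) (hρ : R ≤ ρ)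
    (hdist : |slopeProj z x R y - slopeProj z x R y'| ≤ 2 * ρ) :
    dist (radialProj x y) (radialProj x y') ≤ distortion c M * (c / M ^ 2 * (R * ρ)) := by
  have hc := h.pos
  have hM := h.bound_pos
  have hRρ : 0 ≤ R * ρ := mul_nonneg h.radius_pos.le (h.radius_pos.le.trans hρ)
  calc dist (radialProj x y) (radialProj x y') ≤ 8 * (8 * M + 1) / c ^ 2 * (R * ρ) :=
        h.dist_radialProj_le hy hy' hρ hdist
    _ ≤ 8 * (8 * M + 1) / c ^ 2 * (R * ρ) + c / M ^ 2 * (R * ρ) :=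
        le_add_of_nonneg_right (by positivity)
    _ = distortion c M * (c / M ^ 2 * (R * ρ)) := by
      rw [distortion]
      field_simp

lemma abs_slopeProj_sub_le (h : TransverseBall x z R c M) (hy : dist y z ≤ R) (hy' : dist y' z ≤ R)
    (hρ : R ≤ c * ρ) (hdist : dist (radialProj x y) (radialProj x y') ≤ c / M ^ 2 * (R * ρ)) :
    |slopeProj z x R y - slopeProj z x R y'| ≤ ρ := by
  have hc := h.pos
  have hR := h.radius_pos
  have hM := h.bound_pos
  rw [dist_radialProj (h.ne hy) (h.ne hy')] at hdist
  set D := ‖‖y - x‖⁻¹ • (y - x) - ‖y' - x‖⁻¹ • (y' - x)‖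
  have hcross : |planeCross (y - x) (y' - x)| ≤ c * (R * ρ) :=
    calc |planeCross (y - x) (y' - x)| ≤ ‖y - x‖ * ‖y' - x‖ * D :=
          abs_planeCross_le_norm_mul_norm_mul_norm_inv_smul_sub (sub_ne_zero.mpr (h.ne hy))
            (sub_ne_zero.mpr (h.ne hy'))
      _ ≤ M * M * (c / M ^ 2 * (R * ρ)) := by
          gcongr
          exacts [h.norm_sub_le hy, h.norm_sub_le hy']
      _ = c * (R * ρ) := by field_simp
  have hquad : R * R ≤ R * (c * ρ) := by gcongr
  have hlin : |planeCross (y - y') (z - x)| ≤ 2 * (c * (R * ρ)) := by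
    linarith [abs_sub_abs_le_abs_sub (planeCross (y - y') (z - x)) (planeCross (y - x) (y' - x)),
      abs_sub_comm (planeCross (y - y') (z - x)) (planeCross (y - x) (y' - x)),
      h.abs_planeCross_sub_sub_sub_le hy hy']
  rw [h.abs_planeCross_sub_eq] at hlin
  have hρ₀ : 0 < ρ := pos_of_mul_pos_right (hR.trans_le hρ) hc.le
  refine le_of_mul_le_mul_left ?_ (by positivity : 0 < R * c)
  have hcoef : 4 * R * c * |slopeProj z x R y - slopeProj z x R y'|
      ≤ 4 * R * |z 1 - x 1| * |slopeProj z x R y - slopeProj z x R y'| := by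
    gcongr
    exact h.le_abs_sub
  linarith [mul_pos (mul_pos hR hc) hρ₀]

end TransverseBall

lemma exists_finset_dist_le_of_subset_biUnion {α X Y : Type*} [PseudoMetricSpace Y] {A : Set α}
    {g : α → X} {f : α → Y} {𝒰 : Finset (Set X)} {ρ : ℝ} (hA : ∀ a ∈ A, g a ∈ ⋃ U ∈ 𝒰, U)
    (h : ∀ U ∈ 𝒰, ∀ a ∈ A, ∀ a' ∈ A, g a ∈ U → g a' ∈ U → dist (f a) (f a') ≤ ρ) :
    ∃ S : Finset Y, S.card ≤ 𝒰.card ∧ ∀ a ∈ A, ∃ q ∈ S, dist (f a) q ≤ ρ := by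
  classical
  rcases A.eq_empty_or_nonempty with rfl | ⟨a₀, -⟩
  · exact ⟨∅, by simp, by simp⟩
  have : Nonempty α := ⟨a₀⟩
  choose! rep hrepA hrep using fun (U : Set X) (hU : ∃ a ∈ A, g a ∈ U) => hU
  refine ⟨𝒰.image (f ∘ rep), Finset.card_image_le, fun a ha => ?_⟩
  obtain ⟨U, hU, haU⟩ := mem_iUnion₂.mp (hA a ha)
  exact ⟨f (rep U), Finset.mem_image_of_mem _ hU,
    h U hU a ha _ (hrepA U ⟨a, ha, haU⟩) haU (hrep U ⟨a, ha, haU⟩)⟩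

section AssouadBound

variable {F : Set (Euc 2)} {x z : Euc 2} {C s R c M ρ ρ' : ℝ}

lemma exists_finset_slopeProj_cover (hB : AssouadBound (radialProj x '' F) C s) (hC : 0 ≤ C)
    (hT : TransverseBall x z R c M) (hcρ : R ≤ c * ρ') (hRρ : R ≤ ρ) (hρ : ρ' ≤ ρ) (t : ℝ) :
    ∃ S : Finset ℝ, (∀ y ∈ F, dist y z ≤ R → |slopeProj z x R y - t| ≤ ρ →
        ∃ q ∈ S, |slopeProj z x R y - q| ≤ ρ') ∧
      (S.card : ℝ) ≤ C * distortion c M ^ s * (ρ / ρ') ^ s := by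
  have hc := hT.pos
  have hR := hT.radius_pos
  have hM := hT.bound_pos
  have hρ' : 0 < ρ' := pos_of_mul_pos_right (hR.trans_le hcρ) hc.le
  have hρ₀ : 0 < ρ := hρ'.trans_le hρ
  have hone : 1 < distortion c M := lt_add_of_pos_left _ (by positivity)
  set A : Set (Euc 2) := {y ∈ F | dist y z ≤ R ∧ |slopeProj z x R y - t| ≤ ρ}
  rcases A.eq_empty_or_nonempty with hempty | ⟨y₀, hy₀F, hy₀, hy₀t⟩
  · refine ⟨∅, fun y hyF hy hyt => ?_, ?_⟩
    · exact absurd (show y ∈ A from ⟨hyF, hy, hyt⟩) (hempty ▸ notMem_empty y)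
    · have : 0 < distortion c M := one_pos.trans hone
      rw [Finset.card_empty, Nat.cast_zero]
      positivity
  have hlt : c / M ^ 2 * (R * ρ') < distortion c M * (c / M ^ 2 * (R * ρ)) :=
    calc c / M ^ 2 * (R * ρ') ≤ c / M ^ 2 * (R * ρ) := by gcongr
      _ < distortion c M * (c / M ^ 2 * (R * ρ)) := lt_mul_of_one_lt_left (by positivity) hone
  obtain ⟨𝒰, hcover, hdiam, hcard⟩ :=
    hB _ (mem_image_of_mem _ hy₀F) _ _ (by positivity) hlt
  have hmem : ∀ y ∈ A, radialProj x y ∈ ⋃ U ∈ 𝒰, U := fun y ⟨hyF, hy, hyt⟩ => by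
    have hclose : |slopeProj z x R y - slopeProj z x R y₀| ≤ 2 * ρ := by
      linarith [abs_sub_le (slopeProj z x R y) t (slopeProj z x R y₀),
        abs_sub_comm t (slopeProj z x R y₀)]
    exact hcover ⟨mem_image_of_mem _ hyF, mem_closedBall.mpr
      (hT.dist_radialProj_le_distortion_mul hy hy₀ hRρ hclose)⟩
  have hpiece : ∀ U ∈ 𝒰, ∀ y ∈ A, ∀ y' ∈ A, radialProj x y ∈ U → radialProj x y' ∈ U →
      dist (slopeProj z x R y) (slopeProj z x R y') ≤ ρ' :=
    fun U hU y ⟨_, hy, _⟩ y' ⟨_, hy', _⟩ hyU hyU' => by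
      refine hT.abs_slopeProj_sub_le hy hy' hcρ ?_
      rw [← ENNReal.ofReal_le_ofReal_iff (by positivity), ← edist_dist]
      exact (edist_le_ediam_of_mem hyU hyU').trans (hdiam U hU)
  obtain ⟨S, hScard, hS⟩ := exists_finset_dist_le_of_subset_biUnion hmem hpiece
  refine ⟨S, fun y hyF hy hyt => hS y ⟨hyF, hy, hyt⟩, ?_⟩
  calc (S.card : ℝ) ≤ 𝒰.card := by exact_mod_cast hScard
    _ ≤ C * (distortion c M * (c / M ^ 2 * (R * ρ)) / (c / M ^ 2 * (R * ρ'))) ^ s := hcard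
    _ = C * distortion c M ^ s * (ρ / ρ') ^ s := by
      rw [mul_assoc C, ← Real.mul_rpow (by positivity) (by positivity)]
      congr 2
      field_simp

lemma projHomogeneous_of_assouadBound {b n : ℕ} {P : Finset (ℝ × ℝ)}
    (hB : AssouadBound (radialProj x '' F) C s) (hC : 0 ≤ C) (hT : TransverseBall x z R c M)
    (hb : 0 < b) (hRb : 4 * R * (b : ℝ) ^ n ≤ min c 1)
    (hP : ∀ p ∈ P, ∃ y ∈ F, dist y z ≤ R ∧ rescale z R y = p) :
    ProjHomogeneous b n P (C * distortion c M ^ s) s (projSlope z x) := by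
  intro t ρ ρ' hρ' hρ
  have hbn : (0 : ℝ) < (b : ℝ) ^ n := by positivity
  have hradius : R ≤ min c 1 * ρ' :=
    calc R ≤ 4 * R := by linarith [hT.radius_pos]
      _ ≤ min c 1 * ((b : ℝ) ^ n)⁻¹ := by rwa [← div_eq_mul_inv, le_div_iff₀ hbn]
      _ ≤ min c 1 * ρ' := mul_le_mul_of_nonneg_left hρ' (le_min hT.pos.le zero_le_one)
  have hρ₀ : 0 ≤ ρ' := (inv_pos.mpr hbn).le.trans hρ'
  obtain ⟨S, hS, hcard⟩ := exists_finset_slopeProj_cover hB hC hT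
    (hradius.trans (mul_le_mul_of_nonneg_right (min_le_left c 1) hρ₀))
    ((hradius.trans (mul_le_of_le_one_left hρ₀ (min_le_right c 1))).trans hρ) hρ t
  refine ⟨S, fun p hp hpt => ?_, hcard⟩
  obtain ⟨y, hyF, hy, rfl⟩ := hP p hp
  exact hS y hyF hy hpt

end AssouadBound

/-! ### Rescaled packings -/

/-- `S` is a set of at least `(b ^ n) ^ d` points of `F` in a ball of radius `R`, separated by
`R / b ^ n`. The radius is so small compared with `b ^ (-n)` that radial projections are linear
up to an error below the separation. -/
structure IsPacking (F : Set (Euc 2)) (b n : ℕ) (d : ℝ) (z : Euc 2) (R : ℝ) (S : Finset (Euc 2)) :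
    Prop where
  center_mem : z ∈ F
  radius_pos : 0 < R
  radius_le : R ≤ ((b : ℝ) ^ n)⁻¹ / (n + 1)
  subset : (S : Set (Euc 2)) ⊆ F ∩ closedBall z R
  le_card : ((b : ℝ) ^ n) ^ d ≤ S.card
  separated : (S : Set (Euc 2)).Pairwise fun p q => R / (b : ℝ) ^ n < dist p q

lemma exists_isPacking {F : Set (Euc 2)} {d : ℝ} {b : ℕ} (hF : TotallyBounded F) (hd : 0 ≤ d)
    (h : ∀ C, 0 < C → ¬ AssouadBound F C d) (hb : 2 ≤ b) (n : ℕ) :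
    ∃ z R S, IsPacking F b n d z R S := by
  have hb' : (1 : ℝ) < b := by exact_mod_cast hb
  rcases eq_or_ne n 0 with rfl | hn
  · obtain ⟨z, hz, -⟩ := exists_separated_of_not_assouadBound hF hd h one_lt_two one_pos
    refine ⟨z, 1, {z}, hz, one_pos, by simp, ?_, by simp, ?_⟩
    · simpa only [Finset.coe_singleton, singleton_subset_iff] using
        ⟨hz, mem_closedBall_self zero_le_one⟩
    · simp only [Finset.coe_singleton, pairwise_singleton]
  · obtain ⟨z, hz, R, hR, hRle, S, hS, hcard, hsep⟩ := exists_separated_of_not_assouadBound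
      (R₀ := ((b : ℝ) ^ n)⁻¹ / (n + 1)) hF hd h (one_lt_pow₀ hb' hn) (by positivity)
    exact ⟨z, R, S, hz, hR, hRle, hS, hcard, hsep⟩

section Rescale

variable {z : Euc 2} {R Q : ℝ} {p q : Euc 2}

lemma rescale_injective (hR : 0 < R) : Function.Injective (rescale z R) := fun p q h => by
  simp only [rescale, Prod.mk.injEq, add_left_inj, div_left_inj' (by positivity : 4 * R ≠ 0),
    sub_left_inj] at h
  ext i
  fin_cases i
  exacts [h.1, h.2]

lemma rescale_mem_box (hR : 0 < R) (hp : dist p z ≤ R) :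
    rescale z R p ∈ Icc (-1 : ℝ) 1 ×ˢ Ico (0 : ℝ) 1 := by
  have hcoord : ∀ i, |(p i - z i) / (4 * R)| ≤ 1 / 4 := fun i => by
    rw [abs_div, abs_of_pos (by positivity : 0 < 4 * R), div_le_iff₀ (by positivity)]
    linarith [abs_apply_sub_le_dist p z i]
  have hfst := abs_le.mp (hcoord 0)
  have hsnd := abs_le.mp (hcoord 1)
  rw [rescale, mem_prod, mem_Icc, mem_Ico]
  refine ⟨⟨?_, ?_⟩, ?_, ?_⟩ <;> linarith

lemma dist_le_mul_dist_rescale (hR : 0 < R) :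
    dist p q ≤ 8 * R * dist (rescale z R p) (rescale z R q) := by
  set D := dist (rescale z R p) (rescale z R q)
  have hcoord : ∀ i, dist ((p i - z i) / (4 * R) + 1 / 2) ((q i - z i) / (4 * R) + 1 / 2) ≤ D →
      |p i - q i| ≤ 4 * R * D := fun i h => by
    rwa [dist_add_right, Real.dist_eq, ← sub_div, sub_sub_sub_cancel_right, abs_div,
      abs_of_pos (by positivity : 0 < 4 * R), div_le_iff₀' (by positivity)] at h
  have hfst : |p 0 - q 0| ≤ 4 * R * D := hcoord 0 (le_max_left _ _)
  have hsnd : |p 1 - q 1| ≤ 4 * R * D := hcoord 1 (le_max_right _ _)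
  rw [EuclideanSpace.dist_eq, Fin.sum_univ_two, Real.dist_eq, Real.dist_eq]
  refine Real.sqrt_le_iff.mpr ⟨by positivity, ?_⟩
  nlinarith [pow_le_pow_left₀ (abs_nonneg _) hfst 2, pow_le_pow_left₀ (abs_nonneg _) hsnd 2,
    sq_nonneg (R * D)]

end Rescale

lemma tendsto_projSlope {α : Type*} {l : Filter α} {z : α → Euc 2} {z₀ x : Euc 2}
    (hz : Tendsto z l (𝓝 z₀)) (hx : x 1 ≠ z₀ 1) :
    Tendsto (fun a => projSlope (z a) x) l (𝓝 (projSlope z₀ x)) := by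
  have hcoord : ∀ i, Tendsto (fun a => z a i) l (𝓝 (z₀ i)) := fun i =>
    ((PiLp.continuous_apply 2 _ i).tendsto z₀).comp hz
  exact (((hcoord 0).sub_const (x 0)).neg).div ((hcoord 1).sub_const (x 1))
    (sub_ne_zero.mpr hx.symm)

lemma exists_eventually_transverseBall {x z₀ : Euc 2} (hx : x 1 ≠ z₀ 1) :
    ∃ c M, 0 < c ∧ ∀ᶠ z in 𝓝 z₀, ∀ R, 0 < R → 4 * R ≤ c → TransverseBall x z R c M := by
  have hpos : 0 < |z₀ 1 - x 1| := abs_pos.mpr (sub_ne_zero.mpr hx.symm)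
  set c := |z₀ 1 - x 1| / 2
  have habs : Tendsto (fun z : Euc 2 => |z 1 - x 1|) (𝓝 z₀) (𝓝 |z₀ 1 - x 1|) :=
    (((PiLp.continuous_apply 2 _ 1).tendsto z₀).sub_const (x 1)).abs
  have hnorm : Tendsto (fun z => ‖z - x‖) (𝓝 z₀) (𝓝 ‖z₀ - x‖) :=
    (tendsto_id.sub_const x).norm
  refine ⟨c, ‖z₀ - x‖ + 1 + c, half_pos hpos, ?_⟩
  filter_upwards [habs.eventually_const_le (show c < _ from half_lt_self hpos),
    hnorm.eventually_le_const (lt_add_one ‖z₀ - x‖)] with z hcz hzM R hR hRc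
  exact ⟨hR, hRc, hcz, add_le_add_left hzM c⟩

namespace IsPacking

variable {F : Set (Euc 2)} {b n : ℕ} {d : ℝ}

lemma isDiscretization {z : Euc 2} {R : ℝ} {S : Finset (Euc 2)} (h : IsPacking F b n d z R S)
    (hb : 0 < b) : IsDiscretization b n d (S.image (rescale z R)) where
  mem_box p hp := by
    obtain ⟨y, hy, rfl⟩ := Finset.mem_image.mp hp
    exact rescale_mem_box h.radius_pos (h.subset hy).2
  separated := by
    rw [Finset.coe_image, (rescale_injective h.radius_pos).injOn.pairwise_image]
    intro y hy y' hy' hne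
    have hsep : R < dist y y' * (b : ℝ) ^ n :=
      (div_lt_iff₀ (by positivity)).mp (h.separated hy hy' hne)
    refine le_of_mul_le_mul_left ?_ h.radius_pos
    calc R * 1 ≤ dist y y' * (b : ℝ) ^ n := by rw [mul_one]; exact hsep.le
      _ ≤ 8 * R * dist (rescale z R y) (rescale z R y') * (b : ℝ) ^ n := by
        gcongr
        exact dist_le_mul_dist_rescale h.radius_pos
      _ = R * (8 * (b : ℝ) ^ n * dist (rescale z R y) (rescale z R y')) := by ring
  le_card := by
    rw [Finset.card_image_of_injective _ (rescale_injective h.radius_pos)]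
    exact h.le_card

section Sequence

variable {z : ℕ → Euc 2} {R : ℕ → ℝ} {S : ℕ → Finset (Euc 2)} {l : Filter ℕ} {z₀ x : Euc 2}
  {C s : ℝ}

lemma tendsto_four_mul_radius_mul_pow (h : ∀ n, IsPacking F b n d (z n) (R n) (S n))
    (hb : 0 < b) : Tendsto (fun n => 4 * R n * (b : ℝ) ^ n) atTop (𝓝 0) := by
  have hlim : Tendsto (fun n : ℕ => 4 / ((n : ℝ) + 1)) atTop (𝓝 0) :=
    (tendsto_atTop_add_const_right _ 1 tendsto_natCast_atTop_atTop).const_div_atTop 4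
  refine squeeze_zero (fun n => ?_) (fun n => ?_) hlim
  · have := (h n).radius_pos
    positivity
  · calc 4 * R n * (b : ℝ) ^ n ≤ 4 * (((b : ℝ) ^ n)⁻¹ / (n + 1)) * (b : ℝ) ^ n := by
          gcongr
          exact (h n).radius_le
      _ = 4 / ((n : ℝ) + 1) := by field_simp

lemma eventually_projHomogeneous (h : ∀ n, IsPacking F b n d (z n) (R n) (S n)) (hb : 0 < b)
    (hl : l ≤ atTop) (hz : Tendsto z l (𝓝 z₀)) (hC : 0 ≤ C)
    (hB : AssouadBound (radialProj x '' F) C s) (hx : x 1 ≠ z₀ 1) :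
    ∃ m : ℕ, ∀ᶠ n in l,
      ProjHomogeneous b n ((S n).image (rescale (z n) (R n))) m s (projSlope (z n) x) := by
  obtain ⟨c, M, hc, hT⟩ := exists_eventually_transverseBall hx
  refine ⟨⌈C * distortion c M ^ s⌉₊, ?_⟩
  filter_upwards [hz.eventually hT, ((tendsto_four_mul_radius_mul_pow h hb).mono_left
    hl).eventually_le_const (lt_min hc one_pos)] with n hTn hRn
  have hR := (h n).radius_pos
  have hRc : 4 * R n ≤ c :=
    calc 4 * R n ≤ 4 * R n * (b : ℝ) ^ n :=
          le_mul_of_one_le_right (by positivity) (one_le_pow₀ (by exact_mod_cast hb))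
      _ ≤ c := hRn.trans (min_le_left c 1)
  refine (projHomogeneous_of_assouadBound hB hC (hTn (R n) hR hRc) hb hRn fun p hp => ?_).mono
    (Nat.le_ceil _)
  obtain ⟨y, hy, rfl⟩ := Finset.mem_image.mp hp
  exact ⟨y, ((h n).subset hy).1, ((h n).subset hy).2, rfl⟩

lemma countable_image_projSlope {U : Ultrafilter ℕ}
    (h : ∀ n, IsPacking F b n d (z n) (R n) (S n)) (hb : 2 ≤ b) (hs : s < 1)
    (hgap : Real.log 24 < (d - s) * Real.log b) (hU : (U : Filter ℕ) ≤ atTop)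
    (hz : Tendsto z U (𝓝 z₀)) (C : ℝ) :
    (projSlope z₀ '' {x | x 1 ≠ z₀ 1 ∧ ∀ᶠ n in U, ProjHomogeneous b n
      ((S n).image (rescale (z n) (R n))) C s (projSlope (z n) x)}).Countable := by
  rw [image_eq_range]
  exact countable_range_of_projHomogeneous hU hb hs hgap
    (fun n => (h n).isDiscretization (two_pos.trans_le hb))
    (fun x => tendsto_projSlope hz x.2.1) fun x => x.2.2

end Sequence

end IsPacking

/-! ### The exceptional set -/

/-- The union of countably many affine lines contains `A`. -/
def CountablyManyLinesCover {V : Type*} [AddCommGroup V] [Module ℝ V] (A : Set V) : Prop :=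
  ∃ 𝓛 : Set (AffineSubspace ℝ V), 𝓛.Countable ∧ (∀ L ∈ 𝓛, Module.finrank ℝ L.direction = 1) ∧
    A ⊆ ⋃ L ∈ 𝓛, (L : Set V)

lemma dimH_affineSubspace_le {V : Type*} [NormedAddCommGroup V] [NormedSpace ℝ V]
    (L : AffineSubspace ℝ V) [FiniteDimensional ℝ L.direction] :
    dimH (L : Set V) ≤ Module.finrank ℝ L.direction := by
  rcases (L : Set V).eq_empty_or_nonempty with hL | ⟨p, hp⟩
  · rw [hL, dimH_empty]
    exact zero_le
  have hiso : Isometry fun v : L.direction => (v : V) + p :=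
    (IsometryEquiv.addRight p).isometry.comp isometry_subtype_coe
  calc dimH (L : Set V) ≤ dimH ((fun v : L.direction => (v : V) + p) '' univ) :=
        dimH_mono fun q hq => ⟨⟨q - p, L.vsub_mem_direction hq hp⟩, mem_univ _, sub_add_cancel q p⟩
    _ = Module.finrank ℝ L.direction := by
      rw [hiso.dimH_image, Real.dimH_univ_eq_finrank]

namespace CountablyManyLinesCover

section

variable {V : Type*} [AddCommGroup V] [Module ℝ V] {A B : Set V}

lemma mono (hB : CountablyManyLinesCover B) (h : A ⊆ B) : CountablyManyLinesCover A := by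
  obtain ⟨𝓛, hcount, hline, hcover⟩ := hB
  exact ⟨𝓛, hcount, hline, h.trans hcover⟩

lemma iUnion {ι : Type*} [Countable ι] {A : ι → Set V}
    (h : ∀ i, CountablyManyLinesCover (A i)) : CountablyManyLinesCover (⋃ i, A i) := by
  choose 𝓛 hcount hline hcover using h
  refine ⟨⋃ i, 𝓛 i, countable_iUnion hcount, fun L hL => ?_, iUnion_subset fun i => ?_⟩
  · obtain ⟨i, hi⟩ := mem_iUnion.mp hL
    exact hline i L hi
  · exact (hcover i).trans (biUnion_subset_biUnion_left (subset_iUnion 𝓛 i))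

end

lemma dimH_le_one {V : Type*} [NormedAddCommGroup V] [NormedSpace ℝ V] {A : Set V}
    (hA : CountablyManyLinesCover A) : dimH A ≤ 1 := by
  obtain ⟨𝓛, hcount, hline, hcover⟩ := hA
  refine (dimH_mono hcover).trans ((dimH_bUnion hcount _).trans_le (iSup₂_le fun L hL => ?_))
  have := Module.finite_of_finrank_eq_succ (hline L hL)
  simpa only [hline L hL, Nat.cast_one] using dimH_affineSubspace_le L

end CountablyManyLinesCover

lemma finrank_direction_mk'_span_singleton {V : Type*} [AddCommGroup V] [Module ℝ V] (z : V) {v : V}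
    (hv : v ≠ 0) : Module.finrank ℝ (AffineSubspace.mk' z (ℝ ∙ v)).direction = 1 := by
  rw [AffineSubspace.direction_mk', finrank_span_singleton hv]

lemma mem_mk'_span_of_snd_eq {x z : Euc 2} (h : x 1 = z 1) :
    x ∈ AffineSubspace.mk' z (ℝ ∙ (!₂[1, 0] : Euc 2)) := by
  rw [AffineSubspace.mem_mk', Submodule.mem_span_singleton]
  refine ⟨x 0 - z 0, ?_⟩
  ext i
  fin_cases i <;> simp [h]

lemma mem_mk'_span_projSlope {x z : Euc 2} (h : x 1 ≠ z 1) :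
    x ∈ AffineSubspace.mk' z (ℝ ∙ (!₂[-projSlope z x, 1] : Euc 2)) := by
  rw [AffineSubspace.mem_mk', Submodule.mem_span_singleton]
  have hne : z 1 - x 1 ≠ 0 := sub_ne_zero.mpr h.symm
  refine ⟨x 1 - z 1, ?_⟩
  ext i
  fin_cases i
  · simp only [Fin.isValue, projSlope, neg_sub, Fin.zero_eta, PiLp.smul_apply,
      Matrix.cons_val_zero, smul_eq_mul, mul_neg, vsub_eq_sub, PiLp.sub_apply]
    field_simp
    ring
  · simp

lemma countablyManyLinesCover_of_countable_projSlope {A : Set (Euc 2)} {z : Euc 2}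
    (h : (projSlope z '' {x ∈ A | x 1 ≠ z 1}).Countable) : CountablyManyLinesCover A := by
  let slopeLine : ℝ → AffineSubspace ℝ (Euc 2) := fun t => AffineSubspace.mk' z (ℝ ∙ !₂[-t, 1])
  refine ⟨insert (AffineSubspace.mk' z (ℝ ∙ !₂[1, 0]))
    (slopeLine '' (projSlope z '' {x ∈ A | x 1 ≠ z 1})), (h.image _).insert _, ?_, fun x hx => ?_⟩
  · rintro _ (rfl | ⟨t, -, rfl⟩)
    · exact finrank_direction_mk'_span_singleton z fun h0 => by simpa using congr($h0 0)
    · exact finrank_direction_mk'_span_singleton z fun h0 => by simpa using congr($h0 1)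
  · rw [biUnion_insert]
    by_cases hxz : x 1 = z 1
    · exact Or.inl (mem_mk'_span_of_snd_eq hxz)
    · exact Or.inr (mem_biUnion (mem_image_of_mem slopeLine (mem_image_of_mem _ ⟨hx, hxz⟩))
        (mem_mk'_span_projSlope hxz))

lemma exists_nat_lt_mul_log {c : ℝ} (hc : 0 < c) (a : ℝ) :
    ∃ b : ℕ, 2 ≤ b ∧ a < c * Real.log b := by
  have hlim : Tendsto (fun b : ℕ => c * Real.log b) atTop atTop :=
    (Real.tendsto_log_atTop.comp tendsto_natCast_atTop_atTop).const_mul_atTop hc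
  exact ((eventually_ge_atTop 2).and (hlim.eventually_gt_atTop a)).exists

theorem countablyManyLinesCover_setOf_assouadBound_radialProj {F : Set (Euc 2)} {C s d : ℝ}
    (hF : Bornology.IsBounded F) (hC : 0 ≤ C) (hs₀ : 0 ≤ s) (hs : s < 1) (hsd : s < d)
    (hd : ∀ C, 0 < C → ¬ AssouadBound F C d) :
    CountablyManyLinesCover {x | AssouadBound (radialProj x '' F) C s} := by
  obtain ⟨b, hb, hgap⟩ := exists_nat_lt_mul_log (sub_pos.mpr hsd) (Real.log 24)
  have hb₀ : 0 < b := two_pos.trans_le hb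
  choose z R S h using exists_isPacking
    (hF.isCompact_closure.totallyBounded.subset subset_closure) (hs₀.trans hsd.le) hd hb
  have hU : (hyperfilter ℕ : Filter ℕ) ≤ atTop := Nat.hyperfilter_le_atTop
  obtain ⟨z₀, -, hz⟩ := hF.isCompact_closure.ultrafilter_le_nhds ((hyperfilter ℕ).map z)
    (le_principal_iff.mpr (mem_map.mpr (univ_mem' fun n => subset_closure (h n).center_mem)))
  refine countablyManyLinesCover_of_countable_projSlope (z := z₀) <| (countable_iUnion fun m : ℕ =>
    IsPacking.countable_image_projSlope h hb hs hgap hU hz m).mono ?_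
  rintro _ ⟨x, ⟨hx, hxz⟩, rfl⟩
  obtain ⟨m, hm⟩ := IsPacking.eventually_projHomogeneous h hb₀ hU hz hC hx hxz
  exact mem_iUnion.mpr ⟨m, mem_image_of_mem _ ⟨hxz, hm⟩⟩

lemma isBounded_image_radialProj {n : ℕ} (x : Euc n) (F : Set (Euc n)) :
    Bornology.IsBounded (radialProj x '' F) := by
  refine (isBounded_closedBall (x := x) (r := 1)).subset ?_
  rintro _ ⟨y, -, rfl⟩
  rw [mem_closedBall, dist_eq_norm, radialProj]
  split_ifs with h
  · rw [sub_self, norm_zero]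
    exact zero_le_one
  · have : ‖y - x‖ ≠ 0 := norm_ne_zero_iff.mpr (sub_ne_zero.mpr h)
    rw [add_sub_cancel_right, norm_smul, norm_inv, norm_norm, inv_mul_cancel₀ this]

theorem assouad_radial_projection_planar_general {F : Set (Euc 2)} (hF : Bornology.IsBounded F) :
    CountablyManyLinesCover
      {x | ¬ min (assouadDim F) 1 ≤ assouadDim (radialProj x '' F)} := by
  have hcover (i : {s : ℚ // 0 ≤ (s : ℝ) ∧ (s : ℝ) < min (assouadDim F) 1} × ℕ) :
      CountablyManyLinesCover {x | AssouadBound (radialProj x '' F) i.2 i.1} := by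
    obtain ⟨⟨s, hs₀, hs⟩, C⟩ := i
    obtain ⟨d, hsd, hdF⟩ := exists_between (lt_min_iff.mp hs).1
    exact countablyManyLinesCover_setOf_assouadBound_radialProj hF C.cast_nonneg hs₀
      (lt_min_iff.mp hs).2 hsd fun _ => not_assouadBound_of_lt_assouadDim (hs₀.trans hsd.le) hdF
  refine (CountablyManyLinesCover.iUnion hcover).mono fun x hx => ?_
  obtain ⟨s, hs₀, hs, C, hB⟩ :=
    exists_assouadBound_of_assouadDim_lt (isBounded_image_radialProj x F) (not_le.mp hx)
  exact mem_iUnion.mpr ⟨(⟨s, hs₀, hs⟩, C), hB⟩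

/-- **Corollary 3.9**: for non-empty bounded `F ⊆ ℝ²`,
`dim_A π_x(F) ≥ min{dim_A F, 1}` for all `x ∈ ℝ²` outside a set of exceptions of
Hausdorff dimension at most `1`. -/
theorem assouad_radial_projection_planar (F : Set (Euc 2)) (hne : F.Nonempty)
    (hbd : Bornology.IsBounded F) :
    dimH {x : Euc 2 | ¬ min (assouadDim F) 1 ≤ assouadDim (radialProj x '' F)} ≤ 1 :=
  (assouad_radial_projection_planar_general hbd).dimH_le_one

end
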